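/- arXiv:1706.06945 — 3 statements merged into one kernel-verified Lean document; each statement's English description precedes it below -/
import Mathlib

section
/- For every c ∈ (0,1] and α > 0 there exists n₀ such that for all n ≥ n₀: every ⌈cn⌉-regular graph G on n vertices contains at most ⌊1/c⌋ vertex-disjoint paths whose union covers all but at most αn vertices of G. -/
open Finset

/-- A nonempty list of vertices forms a path in `G`: consecutive vertices adjacent,
no repeats. Lists of length 1 are paths of length 0 (single vertices). -/
def IsPathList {V : Type*} (G : SimpleGraph V) (l : List V) : Prop :=
  l ≠ [] ∧ l.Chain' G.Adj ∧ l.Nodup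


theorem zigzag {ι : Type} [DecidableEq ι] (R : SimpleGraph ι) {a b : ι} (h : R.Adj a b) (m : ℕ) :
    ∃ w : R.Walk a a, w.length = 2 * m ∧
      ∀ i, w.support.count i ≤ m * ((if a = i then 1 else 0) + (if b = i then 1 else 0)) + 1 := by
  induction m with
  | zero =>
    refine ⟨.nil, by simp, fun i => ?_⟩
    simp [List.count_singleton]
    split_ifs <;> simp
  | succ m ih =>
    obtain ⟨w, hw, hc⟩ := ih
    refine ⟨.cons h (.cons h.symm w), by simp [hw]; ring, fun i => ?_⟩
    have := hc i
    simp only [SimpleGraph.Walk.support_cons, List.count_cons, beq_iff_eq]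
    linarith

theorem plan_aux {ι : Type} [DecidableEq ι] (R : SimpleGraph ι) (x : ι → ι → ℕ) (u : ι)
    (E : Finset (ι × ι)) (hE : ∀ e ∈ E, R.Adj e.1 e.2 ∧ R.Reachable u e.1) :
    ∃ v, ∃ w : R.Walk u v, ∑ e ∈ E, 2 * x e.1 e.2 ≤ w.length ∧
      ∀ i, w.support.count i ≤ 1 + ∑ e ∈ E, (x e.1 e.2 * ((if e.1 = i then 1 else 0) +
        (if e.2 = i then 1 else 0)) + 2) := by
  induction E using Finset.induction_on with
  | empty =>
    refine ⟨u, .nil, by simp, fun i => ?_⟩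
    simp [List.count_singleton]
    split_ifs <;> simp
  | insert e E he ih =>
    obtain ⟨v, w, hw, hc⟩ := ih (fun e' h' => hE e' (by simp [h']))
    obtain ⟨hadj, hr⟩ := hE e (by simp)
    obtain ⟨z, hz, hzc⟩ := zigzag R hadj (x e.1 e.2)
    obtain ⟨q, hq⟩ := (w.reachable.symm.trans hr).exists_isPath
    refine ⟨_, (w.append q).append z, ?_, fun i => ?_⟩
    · rw [Finset.sum_insert he, SimpleGraph.Walk.length_append, SimpleGraph.Walk.length_append]
      omega
    · rw [Finset.sum_insert he, SimpleGraph.Walk.support_append, SimpleGraph.Walk.support_append,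
        List.count_append, List.count_append]
      have h1 := hc i
      have h2 := hzc i
      have h3 : q.support.tail.count i ≤ 1 :=
        ((List.tail_sublist _).count_le i).trans (List.nodup_iff_count_le_one.1 hq.support_nodup i)
      have h4 : z.support.tail.count i ≤ z.support.count i := (List.tail_sublist _).count_le i
      omega

theorem plan {ι : Type} [Fintype ι] [DecidableEq ι] (R : SimpleGraph ι) [DecidableRel R.Adj]
    [DecidableEq R.ConnectedComponent]
    (x : ι → ι → ℕ) (hx : ∀ i j, x i j = x j i) (K : R.ConnectedComponent) :
    ∃ L : List ι, L.IsChain R.Adj ∧ (∀ i ∈ L, R.connectedComponentMk i = K) ∧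
      (∀ i, L.count i ≤ 2 * ∑ j, x i j + (2 * Fintype.card ι ^ 2 + 1)) ∧
      ∑ i with R.connectedComponentMk i = K, ∑ j with R.Adj i j, 2 * x i j ≤ L.length := by
  obtain ⟨u, hu⟩ := K.exists_rep
  have hu' : R.connectedComponentMk u = K := hu
  subst hu'
  let E : Finset (ι × ι) := univ.filter fun e => R.connectedComponentMk e.1 = R.connectedComponentMk u ∧ R.Adj e.1 e.2
  obtain ⟨v, w, hw, hc⟩ := plan_aux R x u E (by
    intro e he
    simp only [E, mem_filter] at he
    exact ⟨he.2.2, (SimpleGraph.ConnectedComponent.exact he.2.1).symm⟩)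
  refine ⟨w.support, w.isChain_adj_support, ?_, ?_, ?_⟩
  · intro i hi
    exact SimpleGraph.ConnectedComponent.sound (w.takeUntil i hi).reachable.symm
  · intro i
    refine (hc i).trans ?_
    have h1 : ∑ e ∈ E, (x e.1 e.2 * ((if e.1 = i then 1 else 0) +
        (if e.2 = i then 1 else 0)) + 2) ≤ ∑ e : ι × ι, (x e.1 e.2 * ((if e.1 = i then 1 else 0) +
        (if e.2 = i then 1 else 0)) + 2) := Finset.sum_le_sum_of_subset (subset_univ _)
    have h2 : ∑ e : ι × ι, (x e.1 e.2 * ((if e.1 = i then 1 else 0) +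
        (if e.2 = i then 1 else 0)) + 2) = 2 * ∑ j, x i j + 2 * Fintype.card ι ^ 2 := by
      rw [Finset.sum_add_distrib, Fintype.sum_prod_type]
      simp only [mul_add, Finset.sum_add_distrib, mul_ite, mul_one, mul_zero]
      rw [Finset.sum_comm]
      simp [hx _ i, sq]
      ring
    omega
  · rw [SimpleGraph.Walk.length_support]
    refine le_trans (le_of_eq ?_) (hw.trans (Nat.le_succ _))
    rw [Finset.sum_filter (s := (univ : Finset (ι × ι))), Fintype.sum_prod_type, Finset.sum_filter]
    refine Finset.sum_congr rfl fun i _ => ?_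
    split_ifs with h
    · simp only [h, true_and]
      rw [Finset.sum_filter]
    · simp only [h, false_and, if_false, Finset.sum_const_zero]

theorem embed {V ι : Type} [Fintype V] [DecidableEq V] [DecidableEq ι] (G : SimpleGraph V)
    [DecidableRel G.Adj] (p : V → ι) (R : SimpleGraph ι) (ε₁ ε₂ ρ : ℝ) (h1 : ε₁ ≤ 1)
    (h12 : ε₁ ≤ ε₂ * ρ) (h1ρ : ε₁ ≤ ρ) (hε₂ : 0 ≤ ε₂) (L : List ι)
    (hR : ∀ i j, R.Adj i j → ∀ A B : Finset V, (∀ v ∈ A, p v = i) → (∀ v ∈ B, p v = j) →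
      ε₁ * #{v | p v = i} ≤ #A → ε₁ * #{v | p v = j} ≤ #B →
        ∃ v ∈ A, ε₂ * #B ≤ #(B.filter (G.Adj v)))
    (hne : ∀ i, 0 < #{v | p v = i}) (hε₁ : 0 < ε₁)
    (hL : L.IsChain R.Adj) (hc : ∀ i, (L.count i : ℝ) ≤ (1 - ρ) * #{v | p v = i}) :
    ∃ l : List V, l.map p = L ∧ l.IsChain G.Adj ∧ l.Nodup := by
  have key : ∀ (L : List ι) (i : ι), (i :: L).IsChain R.Adj →
      (∀ j, ((i :: L).count j : ℝ) ≤ (1 - ρ) * #{v | p v = j}) →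
      ∃ l : List V, l.map p = L ∧ ∃ A : Finset V, (∀ v ∈ A, p v = i) ∧
        ε₁ * #{v | p v = i} ≤ #A ∧ ∀ v ∈ A, (v :: l).IsChain G.Adj ∧ (v :: l).Nodup := by
    intro L
    induction L with
    | nil =>
      intro i _ _
      refine ⟨[], rfl, univ.filter (fun v => p v = i), by simp, ?_, by simp⟩
      exact mul_le_of_le_one_left (by positivity) h1
    | cons u L ih =>
      intro i hch hcnt
      rw [List.isChain_cons_cons] at hch
      obtain ⟨l, hl, A, hA, hAc, hAl⟩ := ih u hch.2 (fun j => le_trans (by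
        norm_cast; exact (List.sublist_cons_self _ _).count_le _) (hcnt j))
      set B : Finset V := (univ.filter (fun v => p v = i)) \ l.toFinset with hB
      have hiu : i ≠ u := hch.1.ne
      have hBc : ρ * #{v | p v = i} ≤ #B := by
        have e1 : #(univ.filter (fun v => p v = i)) ≤ #B + L.count i := by
          have : univ.filter (fun v => p v = i) ⊆ B ∪ (l.filter (fun v => p v = i)).toFinset := by
            intro v hv
            simp [hB] at hv ⊢
            tauto
          refine (card_le_card this).trans ((card_union_le _ _).trans ?_)
          gcongr
          refine (List.toFinset_card_le _).trans ?_
          rw [← hl, List.count, List.countP_map, List.countP_eq_length_filter]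
          apply le_of_eq
          congr 1
        have e2 := hcnt i
        have e3 : L.count i ≤ (i :: u :: L).count i := by
          simp [List.count_cons]; omega
        have e4 : (L.count i : ℝ) ≤ (1 - ρ) * #{v | p v = i} := le_trans (by exact_mod_cast e3) e2
        have e5 : (#(univ.filter (fun v => p v = i)) : ℝ) ≤ #B + L.count i := by exact_mod_cast e1
        linarith
      obtain ⟨v, hvA, hv⟩ := hR u i hch.1.symm A B hA (by simp [hB]; tauto) hAc
        (le_trans (by gcongr) hBc)
      refine ⟨v :: l, by simp [hl, hA v hvA], B.filter (G.Adj v), ?_, ?_, ?_⟩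
      · simp [hB]; tauto
      · refine le_trans ?_ hv
        calc ε₁ * #{v | p v = i} ≤ (ε₂ * ρ) * #{v | p v = i} := by gcongr
          _ = ε₂ * (ρ * #{v | p v = i}) := by ring
          _ ≤ _ := by gcongr
      · intro y hy
        simp only [mem_filter, hB, mem_sdiff, mem_univ, true_and, List.mem_toFinset] at hy
        obtain ⟨c1, c2⟩ := hAl v hvA
        refine ⟨List.isChain_cons_cons.2 ⟨hy.2.symm, c1⟩, List.nodup_cons.2 ⟨?_, c2⟩⟩
        rw [List.mem_cons]
        rintro (h | h)
        · apply hiu; rw [← hy.1.1, h, hA v hvA]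
        · exact hy.1.2 h
  cases L with
  | nil => exact ⟨[], by simp⟩
  | cons i L =>
    obtain ⟨l, hl, A, hA, hAc, hAl⟩ := key L i hL hc
    have : 0 < #A := by
      have h2 := hne i
      have : (0:ℝ) < ε₁ * #{v | p v = i} := by positivity
      exact_mod_cast this.trans_le hAc
    obtain ⟨v, hv⟩ := card_pos.1 this
    exact ⟨v :: l, by simp [hl, hA v hv], hAl v hv⟩

theorem exists_deg {V : Type} [DecidableEq V] (G : SimpleGraph V)
    [DecidableRel G.Adj] (A B : Finset V) (hA : A.Nonempty) (r : ℝ)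
    (h : r ≤ (G.edgeDensity A B : ℝ)) : ∃ v ∈ A, r * #B ≤ #(B.filter (G.Adj v)) := by
  by_contra! hcon
  obtain ⟨v, hv⟩ := hA
  have hB : 0 < #B := by
    rcases Nat.eq_zero_or_pos #B with h0 | h0
    · have := hcon v hv
      rw [Finset.card_eq_zero] at h0
      simp [h0] at this
    · exact h0
  have hA : 0 < #A := card_pos.2 ⟨v, hv⟩
  have h1 : #(G.interedges A B) = ∑ v ∈ A, #(B.filter (G.Adj v)) := by
    rw [SimpleGraph.interedges_def, card_filter, sum_product]
    exact sum_congr rfl fun v _ => (card_filter _ _).symm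
  have h2 : (#(G.interedges A B) : ℝ) < ∑ v ∈ A, r * #B := by
    rw [h1]; push_cast
    exact Finset.sum_lt_sum_of_nonempty ⟨v, hv⟩ hcon
  rw [SimpleGraph.edgeDensity_def] at h
  push_cast at h
  rw [le_div_iff₀ (by positivity)] at h
  rw [sum_const, nsmul_eq_mul] at h2
  linarith

theorem reg (e ε₁ : ℝ) (he : 0 < e) (hε₁ : 0 < ε₁) (hle : ε₁ ≤ e / 16) :
    ∃ N : ℕ, 0 < N ∧ ∃ n₀ : ℕ, ∀ (V : Type) [Fintype V] [DecidableEq V] (G : SimpleGraph V)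
      [DecidableRel G.Adj], n₀ ≤ Fintype.card V →
      ∃ (ι : Type) (_ : Fintype ι) (_ : DecidableEq ι) (p : V → ι) (R : SimpleGraph ι)
        (_ : DecidableRel R.Adj),
        Fintype.card ι ≤ N ∧ (∀ i, (Fintype.card V : ℝ) / (2 * N) ≤ #{v | p v = i}) ∧
        (∀ i j, R.Adj i j → ∀ A B : Finset V, (∀ v ∈ A, p v = i) → (∀ v ∈ B, p v = j) →
          ε₁ * #{v | p v = i} ≤ #A → ε₁ * #{v | p v = j} ≤ #B →
          ∃ v ∈ A, (e / 16) * #B ≤ #(B.filter (G.Adj v))) ∧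
        (∀ i, 0 < #{v | p v = i}) ∧
        (#{x : V × V | G.Adj x.1 x.2 ∧ ¬ R.Adj (p x.1) (p x.2)} : ℝ) ≤ e * Fintype.card V ^ 2 := by
  classical
  set t : ℕ := ⌈16 / e⌉₊ with ht
  refine ⟨SzemerediRegularity.bound ε₁ t, SzemerediRegularity.bound_pos _ _, t + 1, ?_⟩
  intro V _ _ G _ hn
  have : Nonempty V := Fintype.card_pos_iff.1 (by omega)
  obtain ⟨P, hP, hP1, hP2, hPu⟩ := szemeredi_regularity G hε₁ (l := t) (by omega)
  let p : V → P.parts := fun v => ⟨P.part v, P.part_mem.2 (mem_univ v)⟩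
  have hp : ∀ i : P.parts, univ.filter (fun v => p v = i) = i.1 := by
    intro i
    ext v
    simp only [mem_filter, mem_univ, true_and, p, Subtype.ext_iff]
    constructor
    · intro h; rw [← h]; exact P.mem_part (mem_univ v)
    · intro h; exact P.part_eq_of_mem i.2 h
  let R : SimpleGraph P.parts :=
    { Adj := fun i j => i ≠ j ∧ G.IsUniform ε₁ i.1 j.1 ∧ e / 8 ≤ (G.edgeDensity i.1 j.1 : ℝ)
      symm := ⟨fun i j h => ⟨h.1.symm, h.2.1.symm, by rw [G.edgeDensity_comm]; exact h.2.2⟩⟩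
      loopless := ⟨fun i h => h.1 rfl⟩ }
  let hdec : DecidableRel R.Adj := Classical.decRel _
  have hpos : ∀ i : P.parts, 0 < #i.1 := fun i => card_pos.2 (P.nonempty_of_mem_parts i.2)
  refine ⟨P.parts, inferInstance, inferInstance, p, R, hdec, by simpa using hP2,
    ?_, ?_, ?_, ?_⟩
  · intro i
    rw [hp i]
    have h1 := hP.average_le_card_part i.2
    have h2 : #P.parts ≤ Fintype.card V := P.card_parts_le_card
    have h3 : 0 < #P.parts := card_pos.2 ⟨_, i.2⟩
    rw [card_univ] at h1
    have h4 : Fintype.card V ≤ 2 * #P.parts * #i.1 := by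
      have h5 := Nat.div_add_mod (Fintype.card V) #P.parts
      have h6 := Nat.mod_lt (Fintype.card V) h3
      have h7 := Nat.mul_le_mul_left #P.parts h1
      have h8 : #P.parts ≤ #P.parts * #i.1 := Nat.le_mul_of_pos_right _ (hpos i)
      nlinarith
    rw [div_le_iff₀ (by have := SzemerediRegularity.bound_pos ε₁ t; positivity)]
    calc (Fintype.card V : ℝ) ≤ 2 * #P.parts * #i.1 := by exact_mod_cast h4
      _ = #i.1 * (2 * #P.parts) := by ring
      _ ≤ _ := by gcongr
  · intro i j hij A B hA hB hAc hBc
    rw [hp] at hAc hBc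
    have hA' : A ⊆ i.1 := fun v hv => by rw [← hp i]; simp [hA v hv]
    have hB' : B ⊆ j.1 := fun v hv => by rw [← hp j]; simp [hB v hv]
    have hu := hij.2.1 hA' hB' (by linarith) (by linarith)
    have hAne : A.Nonempty := by
      have h2 := hpos i
      have : (0:ℝ) < ε₁ * #i.1 := by positivity
      exact card_pos.1 (by exact_mod_cast this.trans_le hAc)
    apply exists_deg G A B hAne
    have := (abs_lt.1 hu).1
    have := hij.2.2
    linarith
  · intro i; rw [hp]; exact hpos i
  · have hsub : (univ.filter fun x : V × V => G.Adj x.1 x.2 ∧ ¬ R.Adj (p x.1) (p x.2)) ⊆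
      (P.nonUniforms G ε₁).biUnion (fun (U, V) ↦ U ×ˢ V) ∪ P.parts.biUnion offDiag ∪
        (P.sparsePairs G (e / 8)).biUnion fun (U, V) ↦ G.interedges U V := by
      rintro ⟨x, y⟩ hxy
      simp only [mem_filter, mem_univ, true_and] at hxy
      obtain ⟨h, h'⟩ := hxy
      have hx : x ∈ (p x).1 := P.mem_part (mem_univ x)
      have hy : y ∈ (p y).1 := P.mem_part (mem_univ y)
      simp only [mem_biUnion, mem_union, mem_product, Prod.exists, mem_offDiag,
        or_assoc, and_assoc, P.mk_mem_nonUniforms, Finpartition.mk_mem_sparsePairs,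
        SimpleGraph.mem_interedges_iff]
      by_cases hne : p x = p y
      · exact Or.inr (Or.inl ⟨(p x).1, (p x).2, hx, by rw [hne]; exact hy, h.ne⟩)
      have hne' : (p x).1 ≠ (p y).1 := fun hh => hne (Subtype.ext hh)
      by_cases h₂ : G.IsUniform ε₁ (p x).1 (p y).1
      · refine Or.inr <| Or.inr ⟨_, _, (p x).2, (p y).2, hne', ?_, hx, hy, h⟩
        by_contra! h3
        exact h' ⟨hne, h₂, h3⟩
      · exact Or.inl ⟨_, _, (p x).2, (p y).2, hne', h₂, hx, hy⟩
    have c0 := (card_le_card hsub).trans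
      ((card_union_le _ _).trans (Nat.add_le_add_right (card_union_le _ _) _))
    have c1 := hP.sum_nonUniforms_lt (G := G) univ_nonempty hε₁ hPu
    have c2 := hP.card_biUnion_offDiag_le (𝕜 := ℝ) (ε := e / 4) (by positivity) (by
      have : 16 / e ≤ t := Nat.le_ceil _
      have h3 : (t : ℝ) ≤ #P.parts := by exact_mod_cast hP1
      calc 4 / (e / 4) = 16 / e := by field_simp; norm_num
        _ ≤ _ := this.trans h3)
    have c3 := hP.card_interedges_sparsePairs_le (G := G) (ε := e / 8) (by positivity)
    rw [card_univ] at c1 c2 c3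
    have c0' := (Nat.cast_le (α := ℝ)).2 c0
    rw [Nat.cast_add, Nat.cast_add] at c0'
    have : ε₁ * (Fintype.card V : ℝ) ^ 2 ≤ e / 16 * (Fintype.card V : ℝ) ^ 2 := by gcongr
    have : 0 ≤ e * (Fintype.card V : ℝ) ^ 2 := by positivity
    linarith

theorem two_sum {ι : Type} [Fintype ι] (R : SimpleGraph ι) [DecidableRel R.Adj]
    [DecidableEq R.ConnectedComponent] (big : Finset R.ConnectedComponent) :
    ∑ K ∈ big, ∑ i with R.connectedComponentMk i = K, ∑ j with R.Adj i j, (2 : ℝ) ≤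
        2 * (Fintype.card ι : ℝ) ^ 2 := by
  classical
  have h0 : ∀ i, ∑ j with R.Adj i j, (2 : ℝ) ≤ 2 * Fintype.card ι := by
    intro i
    rw [sum_const, nsmul_eq_mul, mul_comm]
    gcongr
    exact card_le_univ _
  have h1 : ∑ K ∈ big, #{i | R.connectedComponentMk i = K} ≤ Fintype.card ι := by
    rw [← card_biUnion]
    · exact card_le_univ _
    · intro K _ K' _ hne
      rw [Function.onFun, disjoint_left]
      intro i hi hi'
      simp only [mem_filter, mem_univ, true_and] at hi hi'
      exact hne (hi.symm.trans hi')
  calc _ ≤ ∑ K ∈ big, ∑ i with R.connectedComponentMk i = K, 2 * (Fintype.card ι : ℝ) :=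
        sum_le_sum fun K _ => sum_le_sum fun i _ => h0 i
    _ = (∑ K ∈ big, (#{i | R.connectedComponentMk i = K} : ℝ)) * (2 * Fintype.card ι) := by
        rw [sum_mul]
        exact sum_congr rfl fun K _ => by rw [sum_const, nsmul_eq_mul]
    _ ≤ Fintype.card ι * (2 * Fintype.card ι) := by
        gcongr
        exact_mod_cast h1
    _ = _ := by ring

set_option maxHeartbeats 1000000 in
theorem assemble {V ι : Type} [Fintype V] [DecidableEq V] [Fintype ι] [DecidableEq ι]
    (G : SimpleGraph V) [DecidableRel G.Adj] (p : V → ι) (R : SimpleGraph ι)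
    [DecidableRel R.Adj] (c a e ρ η : ℝ) (k N d n : ℕ) (hnV : Fintype.card V = n)
    (hn0 : 0 < n) (hc0 : 0 < c) (ha0 : 0 < a) (ha1 : a ≤ 1) (he : 0 < e)
    (hd : c * n ≤ d) (hG : G.IsRegularOfDegree d) (hη : 0 < η)
    (hk : η + 1 / (k + 1) ≤ c) (hρ : ρ = a / 8)
    (hec : e ≤ a / 8 * c) (heη : e ≤ a / 8 * η)
    (hN0 : 0 < N) (hN : Fintype.card ι ≤ N)
    (hsize : ∀ i, (n : ℝ) / (2 * N) ≤ #{v | p v = i})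
    (hR : ∀ i j, R.Adj i j → ∀ A B : Finset V, (∀ v ∈ A, p v = i) → (∀ v ∈ B, p v = j) →
      (e / 16 * ρ) * #{v | p v = i} ≤ #A → (e / 16 * ρ) * #{v | p v = j} ≤ #B →
        ∃ v ∈ A, (e / 16) * #B ≤ #(B.filter (G.Adj v)))
    (hne : ∀ i, 0 < #{v | p v = i})
    (hbad : (#{x : V × V | G.Adj x.1 x.2 ∧ ¬ R.Adj (p x.1) (p x.2)} : ℝ) ≤ e * n ^ 2)
    (hbig : 2 * (N : ℝ) ^ 2 + 1 ≤ a / 8 * (n / (2 * N))) (he1 : e ≤ 1) :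
    ∃ P : Finset (List V),
          (∀ l ∈ P, l ≠ [] ∧ l.IsChain G.Adj ∧ l.Nodup) ∧
          (∀ l ∈ P, ∀ l' ∈ P, l ≠ l' → ∀ v, v ∈ l → v ∉ l') ∧
          P.card ≤ k ∧
          ((Finset.univ.filter (fun v : V => ∀ l ∈ P, v ∉ l)).card : ℝ) ≤ a * n := by
  classical
  have hnR : (0:ℝ) < n := by exact_mod_cast hn0
  have hdR : (0:ℝ) < d := lt_of_lt_of_le (by positivity) hd
  -- edge counts between classes
  let I : ι → ι → ℕ := fun i j => ∑ u with p u = i, ∑ v with p v = j, if G.Adj u v then 1 else 0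
  have hIsymm : ∀ i j, I i j = I j i := by
    intro i j
    simp only [I]
    rw [Finset.sum_comm]
    simp only [G.adj_comm]
  have hIS : ∀ i (S : Finset ι), ∑ j ∈ S, I i j = ∑ u with p u = i, #{v | G.Adj u v ∧ p v ∈ S} := by
    intro i S
    simp only [I]
    rw [Finset.sum_comm]
    refine sum_congr rfl fun u _ => ?_
    rw [card_eq_sum_card_fiberwise (s := univ.filter fun v => G.Adj u v ∧ p v ∈ S) (t := S)
      (f := p) (fun v hv => (mem_filter.1 hv).2.2)]
    refine sum_congr rfl fun j hj => ?_
    rw [← card_filter, filter_filter, filter_filter]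
    congr 1
    ext v
    simp only [mem_filter, mem_univ, true_and]
    constructor
    · rintro ⟨h1, h2⟩; exact ⟨⟨h2, h1 ▸ hj⟩, h1⟩
    · rintro ⟨⟨h1, _⟩, h2⟩; exact ⟨h2, h1⟩
  have hdeg : ∀ u, #{v | G.Adj u v} = d := by
    intro u
    rw [← hG u, ← G.card_neighborFinset_eq_degree]
    congr 1; ext v; simp
  let x : ι → ι → ℕ := fun i j => ⌊(1 - a / 4) * I i j / (2 * d)⌋₊
  have hxsymm : ∀ i j, x i j = x j i := fun i j => by simp only [x, hIsymm i j]
  have ha4 : 0 ≤ 1 - a / 4 := by linarith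
  have hxle : ∀ i j, (x i j : ℝ) ≤ (1 - a / 4) * I i j / (2 * d) :=
    fun i j => Nat.floor_le (by positivity)
  have hxge : ∀ i j, (1 - a / 4) * I i j / (2 * d) - 1 ≤ (x i j : ℝ) :=
    fun i j => (Nat.sub_one_lt_floor _).le
  have hxsum : ∀ i, 2 * ∑ j, (x i j : ℝ) ≤ (1 - a / 4) * #{v | p v = i} := by
    intro i
    have h1 : ∑ j, (I i j : ℝ) = #{v | p v = i} * d := by
      have := hIS i univ
      simp only [mem_univ, and_true, hdeg, sum_const, smul_eq_mul] at this
      exact_mod_cast this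
    calc 2 * ∑ j, (x i j : ℝ) ≤ 2 * ∑ j, (1 - a / 4) * I i j / (2 * d) := by
          gcongr with j; exact hxle i j
      _ = (1 - a / 4) / d * ∑ j, (I i j : ℝ) := by
          rw [mul_sum, mul_sum]
          refine sum_congr rfl fun j _ => ?_
          field_simp
      _ = _ := by rw [h1]; field_simp
  have hpath : ∀ K : R.ConnectedComponent, ∃ l : List V, l.IsChain G.Adj ∧ l.Nodup ∧
      (∀ v ∈ l, R.connectedComponentMk (p v) = K) ∧
      ∑ i with R.connectedComponentMk i = K, ∑ j with R.Adj i j, 2 * x i j ≤ l.length := by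
    intro K
    obtain ⟨L, hL1, hL2, hL3, hL4⟩ := plan R x hxsymm K
    have hρ0 : 0 < ρ := by rw [hρ]; positivity
    have hρ1 : ρ ≤ 1 := by rw [hρ]; linarith
    obtain ⟨l, hl1, hl2, hl3⟩ := embed G p R (e / 16 * ρ) (e / 16) ρ
      (by nlinarith) le_rfl (by nlinarith) (by positivity) L hR hne (by positivity) hL1 (by
        intro i
        have h1 : (L.count i : ℝ) ≤ 2 * ∑ j, (x i j : ℝ) + (2 * (Fintype.card ι : ℝ) ^ 2 + 1) := by
          exact_mod_cast hL3 i
        have h2 := hxsum i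
        have h3 : (Fintype.card ι : ℝ) ^ 2 ≤ (N : ℝ) ^ 2 := by gcongr
        have h4 : a / 8 * ((n : ℝ) / (2 * N)) ≤ a / 8 * #{v | p v = i} := by
          gcongr; exact hsize i
        rw [hρ]
        linarith)
    refine ⟨l, hl2, hl3, ?_, ?_⟩
    · intro v hv
      apply hL2
      rw [← hl1]
      exact List.mem_map_of_mem hv
    · rw [← hl1, List.length_map] at hL4
      exact hL4
  choose l hl1 hl2 hl3 hl4 using hpath
  let S : R.ConnectedComponent → Finset V := fun K => univ.filter fun v => R.connectedComponentMk (p v) = K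
  let big : Finset R.ConnectedComponent := univ.filter fun K => (n : ℝ) < (k + 1) * #(S K)
  have hbigcard : #big ≤ k := by
    by_contra! hlt
    have h1 : ∑ K ∈ big, #(S K) ≤ n := by
      rw [← hnV, ← card_univ, card_eq_sum_card_fiberwise (f := fun v => R.connectedComponentMk (p v))
        (t := univ) (by simp)]
      exact sum_le_sum_of_subset (subset_univ _)
    have h2 : ∑ K ∈ big, (n : ℝ) < ∑ K ∈ big, (k + 1) * (#(S K) : ℝ) := by
      apply sum_lt_sum_of_nonempty (card_pos.1 (by omega))
      intro K hK
      exact (mem_filter.1 hK).2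
    rw [← mul_sum, sum_const, nsmul_eq_mul] at h2
    have h3 : (∑ K ∈ big, (#(S K) : ℝ)) ≤ n := by exact_mod_cast h1
    have h4 : ((k : ℝ) + 1) ≤ #big := by exact_mod_cast hlt
    have h5 : ((k : ℝ) + 1) * ∑ K ∈ big, (#(S K) : ℝ) ≤ (k + 1) * n := by gcongr
    have h6 : ((k : ℝ) + 1) * n ≤ #big * n := by gcongr
    linarith
  let m : V → ℕ := fun u => #{v | G.Adj u v ∧ R.Adj (p u) (p v)}
  let b : V → ℕ := fun u => #{v | G.Adj u v ∧ ¬ R.Adj (p u) (p v)}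
  have hmb : ∀ u, m u + b u = d := by
    intro u
    rw [← hdeg u]
    simp only [m, b]
    rw [← filter_filter, ← filter_filter]
    exact card_filter_add_card_filter_not _
  have hbsum : (∑ u, (b u : ℝ)) ≤ e * n ^ 2 := by
    refine le_trans (le_of_eq ?_) hbad
    rw [card_filter, Fintype.sum_prod_type]
    push_cast
    refine sum_congr rfl fun u _ => ?_
    simp only [b]
    rw [card_filter]
    push_cast
    rfl
  let bigV : Finset V := univ.filter fun v => R.connectedComponentMk (p v) ∈ big
  let smallV : Finset V := univ.filter fun v => ¬ R.connectedComponentMk (p v) ∈ big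
  have hVcard : (#bigV : ℝ) + #smallV = n := by
    rw [← hnV]
    exact_mod_cast card_filter_add_card_filter_not _
  have hsm : ∀ u ∈ smallV, η * n ≤ b u := by
    intro u hu
    have h1 : m u ≤ #(S (R.connectedComponentMk (p u))) := by
      apply card_le_card
      intro v hv
      simp only [mem_filter, mem_univ, true_and, S] at hv ⊢
      exact SimpleGraph.ConnectedComponent.sound hv.2.symm.reachable
    have h2 : ((k : ℝ) + 1) * #(S (R.connectedComponentMk (p u))) ≤ n := by
      simp only [smallV, big, mem_filter, mem_univ, true_and, not_lt] at hu
      exact hu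
    have h3 : (m u : ℝ) ≤ n / (k + 1) := by
      rw [le_div_iff₀ (by positivity)]
      have : (m u : ℝ) ≤ #(S (R.connectedComponentMk (p u))) := by exact_mod_cast h1
      nlinarith
    have h4 : (m u : ℝ) + b u = d := by exact_mod_cast hmb u
    have h5 : (η + 1 / (k + 1)) * n ≤ c * n := by gcongr
    have h6 : (η + 1 / (k + 1)) * (n : ℝ) = η * n + n / (k + 1) := by ring
    linarith
  have hsmall : (#smallV : ℝ) ≤ a / 8 * n := by
    have h1 : (#smallV : ℝ) * (η * n) ≤ e * n ^ 2 := by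
      calc (#smallV : ℝ) * (η * n) = ∑ u ∈ smallV, η * n := by rw [sum_const, nsmul_eq_mul]
        _ ≤ ∑ u ∈ smallV, (b u : ℝ) := sum_le_sum hsm
        _ ≤ ∑ u, (b u : ℝ) := sum_le_sum_of_subset_of_nonneg (subset_univ _) (by simp)
        _ ≤ _ := hbsum
    have h2 : e * (n : ℝ) ^ 2 ≤ (a / 8 * η) * n ^ 2 := by gcongr
    have h3 : (#smallV : ℝ) * (η * n) ≤ (a / 8 * n) * (η * n) := by nlinarith
    exact le_of_mul_le_mul_right h3 (by positivity)
  -- the total length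
  have htot : (1 - a / 4) / d * ∑ u ∈ bigV, (m u : ℝ) - 2 * (N : ℝ) ^ 2 ≤
      ∑ K ∈ big, ((l K).length : ℝ) := by
    have h1 : ∑ u ∈ bigV, (m u : ℝ) =
        ∑ K ∈ big, ∑ i with R.connectedComponentMk i = K, ∑ j with R.Adj i j, (I i j : ℝ) := by
      have e1 : ∀ i, ∑ j with R.Adj i j, (I i j : ℝ) = ∑ u with p u = i, (m u : ℝ) := by
        intro i
        have := hIS i (univ.filter fun j => R.Adj i j)
        rw [← Nat.cast_sum, this, Nat.cast_sum]
        refine sum_congr rfl fun u hu => ?_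
        simp only [mem_filter, mem_univ, true_and] at hu
        simp [m, hu]
      simp only [e1]
      rw [← sum_fiberwise_of_maps_to (s := bigV) (t := big)
        (g := fun v => R.connectedComponentMk (p v)) (by simp [bigV])]
      refine sum_congr rfl fun K hK => ?_
      rw [← sum_fiberwise_of_maps_to (t := univ.filter fun i => R.connectedComponentMk i = K)
        (g := p) (by simp)]
      refine sum_congr rfl fun i hi => ?_
      refine sum_congr ?_ fun _ _ => rfl
      simp only [mem_filter, mem_univ, true_and] at hi
      ext v
      simp only [mem_filter, mem_univ, true_and, bigV]
      constructor
      · rintro ⟨_, h⟩; exact h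
      · intro h; rw [h, hi]; exact ⟨⟨hK, rfl⟩, rfl⟩
    have h2 : ∑ K ∈ big, ∑ i with R.connectedComponentMk i = K, ∑ j with R.Adj i j, (2 : ℝ) ≤
        2 * (N : ℝ) ^ 2 := by
      have hh := two_sum R big
      have hh2 : 2 * (Fintype.card ι : ℝ) ^ 2 ≤ 2 * (N : ℝ) ^ 2 := by gcongr
      exact hh.trans hh2
    have h3 : ∀ K, ∑ i with R.connectedComponentMk i = K, ∑ j with R.Adj i j,
        ((1 - a / 4) / d * (I i j : ℝ) - 2) ≤ ((l K).length : ℝ) := by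
      intro K
      have := (Nat.cast_le (α := ℝ)).2 (hl4 K)
      push_cast at this
      refine le_trans ?_ this
      gcongr with i _ j _
      have h5 := hxge i j
      have h6 : (1 - a / 4) * (I i j : ℝ) / (2 * d) = (1 - a / 4) / d * (I i j : ℝ) / 2 := by
        field_simp
      rw [h6] at h5
      linarith
    have h4 := sum_le_sum fun K (_ : K ∈ big) => h3 K
    simp only [sum_sub_distrib, ← mul_sum] at h4
    rw [← h1] at h4
    linarith
  have hm : (d : ℝ) * #bigV - e * n ^ 2 ≤ ∑ u ∈ bigV, (m u : ℝ) := by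
    have h1 : ∑ u ∈ bigV, ((m u : ℝ) + b u) = #bigV * d := by
      rw [← nsmul_eq_mul, ← sum_const]
      exact sum_congr rfl fun u _ => by exact_mod_cast hmb u
    rw [sum_add_distrib] at h1
    have h2 : ∑ u ∈ bigV, (b u : ℝ) ≤ ∑ u, (b u : ℝ) :=
      sum_le_sum_of_subset_of_nonneg (subset_univ _) (by simp)
    linarith
  have hcov : (1 - a) * n ≤ ∑ K ∈ big, ((l K).length : ℝ) := by
    refine le_trans ?_ htot
    have h1 : (1 - a / 4) / d * ((d : ℝ) * #bigV - e * n ^ 2) ≤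
        (1 - a / 4) / d * ∑ u ∈ bigV, (m u : ℝ) := by gcongr
    have h2 : (1 - a / 4) / d * ((d : ℝ) * #bigV - e * n ^ 2) =
        (1 - a / 4) * (#bigV - e * n ^ 2 / d) := by field_simp
    have h3 : e * (n : ℝ) ^ 2 / d ≤ a / 8 * n := by
      rw [div_le_iff₀ hdR]
      calc e * (n : ℝ) ^ 2 ≤ (a / 8 * c) * n ^ 2 := by gcongr
        _ = a / 8 * n * (c * n) := by ring
        _ ≤ _ := by gcongr
    have h4 : (1 - a / 4) * ((1 - a / 4) * n) ≤ (1 - a / 4) * (#bigV - e * n ^ 2 / d) := by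
      gcongr
      linarith
    have h5 : a / 8 * ((n : ℝ) / (2 * N)) ≤ a / 8 * n := by
      gcongr
      apply div_le_self hnR.le
      have : (1:ℝ) ≤ N := by exact_mod_cast hN0
      linarith
    have h6 : 0 ≤ a * n := by positivity
    have h7 : 0 ≤ a * a * n := by positivity
    nlinarith
  -- the path system
  refine ⟨(big.image l).filter (fun l => l ≠ []), ?_, ?_, ?_, ?_⟩
  · intro q hq
    simp only [mem_filter, mem_image] at hq
    obtain ⟨⟨K, _, rfl⟩, h⟩ := hq
    exact ⟨h, hl1 K, hl2 K⟩
  · intro q hq q' hq' hne v hv hv'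
    simp only [mem_filter, mem_image] at hq hq'
    obtain ⟨⟨K, _, rfl⟩, h⟩ := hq
    obtain ⟨⟨K', _, rfl⟩, h'⟩ := hq'
    have := (hl3 K v hv).symm.trans (hl3 K' v hv')
    exact hne (by rw [this])
  · exact (card_filter_le _ _).trans (card_image_le.trans hbigcard)
  · let C : Finset V := big.biUnion fun K => (l K).toFinset
    have hC : #C = ∑ K ∈ big, (l K).length := by
      rw [card_biUnion]
      · exact sum_congr rfl fun K _ => List.toFinset_card_of_nodup (hl2 K)
      · intro K _ K' _ hKK
        rw [Function.onFun, disjoint_left]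
        intro v hv hv'
        rw [List.mem_toFinset] at hv hv'
        exact hKK ((hl3 K v hv).symm.trans (hl3 K' v hv'))
    have hsub : univ.filter (fun v : V => ∀ q ∈ (big.image l).filter (fun l => l ≠ []), v ∉ q) ⊆ Cᶜ := by
      intro v hv
      simp only [mem_filter, mem_univ, true_and] at hv
      simp only [C, mem_compl, mem_biUnion, not_exists, not_and, List.mem_toFinset]
      intro K hK hvK
      refine hv (l K) ⟨mem_image_of_mem _ hK, ?_⟩ hvK
      rintro h0; rw [h0] at hvK; simp at hvK
    have h1 := card_le_card hsub
    have h2 : #C + #Cᶜ = n := by rw [← hnV]; exact card_add_card_compl C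
    have h3 : (#C : ℝ) + #Cᶜ = n := by exact_mod_cast h2
    have h4 : (#C : ℝ) = ∑ K ∈ big, ((l K).length : ℝ) := by exact_mod_cast hC
    refine le_trans (Nat.cast_le.2 h1) ?_
    linarith

theorem stmt_16 (c α : ℝ) (hc0 : 0 < c) (hc1 : c ≤ 1) (hα : 0 < α) :
    ∃ n₀ : ℕ, ∀ n : ℕ, n₀ ≤ n →
      ∀ (V : Type) [Fintype V] [DecidableEq V] (G : SimpleGraph V) [DecidableRel G.Adj],
        Fintype.card V = n → G.IsRegularOfDegree ⌈c * n⌉₊ →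
        ∃ P : Finset (List V),
          (∀ l ∈ P, IsPathList G l) ∧
          (∀ l ∈ P, ∀ l' ∈ P, l ≠ l' → ∀ v, v ∈ l → v ∉ l') ∧
          P.card ≤ ⌊1 / c⌋₊ ∧
          ((Finset.univ.filter (fun v : V => ∀ l ∈ P, v ∉ l)).card : ℝ) ≤ α * n := by
  set k : ℕ := ⌊1 / c⌋₊ with hk
  set a : ℝ := min α 1 with ha
  have ha0 : 0 < a := lt_min hα one_pos
  have ha1 : a ≤ 1 := min_le_right _ _
  have haα : a ≤ α := min_le_left _ _
  have hkc : 1 / ((k : ℝ) + 1) < c := by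
    have := Nat.lt_floor_add_one (1 / c)
    rw [div_lt_iff₀ hc0] at this
    rw [div_lt_iff₀ (by positivity)]
    linarith
  set η : ℝ := c - 1 / ((k : ℝ) + 1) with hη
  have hη0 : 0 < η := by linarith
  have hηc : η ≤ c := by
    have : 0 ≤ 1 / ((k : ℝ) + 1) := by positivity
    linarith
  set e : ℝ := a / 8 * η with he
  have he0 : 0 < e := by positivity
  have hec : e ≤ a / 8 * c := by rw [he]; gcongr
  have he1 : e ≤ 1 := by
    have : a / 8 * c ≤ 1 / 8 * 1 := by gcongr
    linarith
  obtain ⟨N, hN0, n₁, hreg⟩ := reg e (e / 16 * (a / 8)) he0 (by positivity)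
    (mul_le_of_le_one_right (by positivity) (by linarith))
  have hNR : (0:ℝ) < N := by exact_mod_cast hN0
  refine ⟨n₁ + 1 + ⌈(2 * (N : ℝ) ^ 2 + 1) * (2 * N) / (a / 8)⌉₊, ?_⟩
  intro n hn V _ _ G _ hnV hG
  obtain ⟨ι, _, _, p, R, _, h1, h2, h3, h4, h5⟩ := hreg V G (by omega)
  rw [hnV] at h2 h5
  obtain ⟨P, hP1, hP2, hP3, hP4⟩ := assemble G p R c a e (a / 8) η k N ⌈c * n⌉₊ n hnV (by omega)
    hc0 ha0 ha1 he0 (Nat.le_ceil _) hG hη0 (by linarith) rfl hec le_rfl hN0 h1 h2 h3 h4 h5 (by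
      have h6 : (2 * (N : ℝ) ^ 2 + 1) * (2 * N) / (a / 8) ≤ n :=
        (Nat.le_ceil _).trans (Nat.cast_le.2 (by omega))
      rw [div_le_iff₀ (by positivity)] at h6
      rw [← mul_div_assoc, le_div_iff₀ (by positivity)]
      linarith) he1
  exact ⟨P, hP1, hP2, hP3, hP4.trans (by gcongr)⟩
end

section
/- For every c ∈ (0,1] and α > 0 there exists n₀ such that for all n ≥ n₀: every bipartite ⌈cn⌉-regular graph G on n vertices contains at most ⌊1/(2c)⌋ vertex-disjoint paths whose union covers all but at most αn vertices of G. -/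
open Finset

lemma exists_balanced {V : Type*} [DecidableEq V] (t : ℕ) (ht : 0 < t) (w : V → V → ℝ)
    (hsymm : ∀ x y, w x y = w y x) (hdiag : ∀ x, 0 ≤ w x x) (A : Finset V) :
    ∃ f : V → ℕ, (∀ v, f v < t) ∧
      t * ∑ x ∈ A, ∑ y ∈ A, (if f x = f y then w x y else 0)
        ≤ t * ∑ x ∈ A, w x x + ∑ x ∈ A, ∑ y ∈ A, w x y := by
  classical
  induction A using Finset.induction_on with
  | empty => exact ⟨fun _ => 0, fun _ => ht, by simp⟩
  | insert a A ha ih =>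
    obtain ⟨f, hf, h⟩ := ih
    obtain ⟨i, hi, hle⟩ : ∃ i ∈ Finset.range t,
        (t : ℝ) * ∑ y ∈ A, (if i = f y then w a y else 0) ≤ ∑ y ∈ A, w a y := by
      apply Finset.exists_le_of_sum_le (Finset.nonempty_range_iff.mpr ht.ne')
      rw [← Finset.mul_sum, Finset.sum_comm]
      simp only [Finset.sum_const, Finset.card_range, nsmul_eq_mul]
      apply le_of_eq
      congr 1
      apply Finset.sum_congr rfl
      intro y _
      rw [Finset.sum_ite_eq']
      simp [hf y]
    refine ⟨Function.update f a i, ?_, ?_⟩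
    · intro v
      by_cases hv : v = a
      · subst hv; simpa using hi
      · simpa [hv] using hf v
    · have hne : ∀ x ∈ A, x ≠ a := fun x hx h => ha (h ▸ hx)
      have e0 : ∀ x ∈ A, Function.update f a i x = f x := fun x hx => by simp [hne x hx]
      have e1 : ∑ y ∈ A, (if Function.update f a i a = Function.update f a i y then w a y else 0)
          = ∑ y ∈ A, (if i = f y then w a y else 0) := by
        apply Finset.sum_congr rfl
        intro y hy
        rw [e0 y hy]; simp
      have e2 : ∑ x ∈ A, (if Function.update f a i x = Function.update f a i a then w x a else 0)
          = ∑ y ∈ A, (if i = f y then w a y else 0) := by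
        rw [← e1]
        apply Finset.sum_congr rfl
        intro y hy
        rw [hsymm y a]
        simp only [eq_comm]
      have e3 : ∑ x ∈ A, ∑ y ∈ A,
            (if Function.update f a i x = Function.update f a i y then w x y else 0)
          = ∑ x ∈ A, ∑ y ∈ A, (if f x = f y then w x y else 0) := by
        apply Finset.sum_congr rfl
        intro x hx
        apply Finset.sum_congr rfl
        intro y hy
        rw [e0 x hx, e0 y hy]
      have e4 : ∑ x ∈ A, w x a = ∑ x ∈ A, w a x := Finset.sum_congr rfl fun x _ => hsymm x a
      simp only [Finset.sum_insert ha, Finset.sum_add_distrib]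
      rw [e1, e2, e3, e4]
      simp only [if_true]
      have := hdiag a
      nlinarith

lemma exists_partition {V : Type*} [Fintype V] [DecidableEq V] (G : SimpleGraph V)
    [DecidableRel G.Adj] (d t : ℕ) (ht : 0 < t) (hG : G.IsRegularOfDegree d) :
    ∃ f : V → ℕ, (∀ v, f v < t) ∧
      ∑ v : V, ∑ i ∈ Finset.range t,
        ((((G.neighborFinset v).filter (fun u => f u = i)).card : ℝ) - (d : ℝ) / t) ^ 2
        ≤ Fintype.card V * d := by
  classical
  have hdeg : ∀ v, ((G.neighborFinset v).card : ℝ) = d := by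
    intro v
    rw [G.card_neighborFinset_eq_degree, hG.degree_eq v]
  let a : V → V → ℝ := fun v x => if x ∈ G.neighborFinset v then 1 else 0
  have ha : ∀ v, ∑ x, a v x = d := by
    intro v
    rw [← hdeg v]; simp only [a, Finset.sum_ite_mem, Finset.univ_inter, Finset.sum_const]; simp
  have ha' : ∀ x, ∑ v, a v x = d := by
    intro v
    rw [← ha v]
    apply Finset.sum_congr rfl
    intro x _
    simp [a, G.adj_comm]
  obtain ⟨f, hf, h⟩ := exists_balanced t ht (fun x y => ∑ v, a v x * a v y)
    (fun x y => Finset.sum_congr rfl fun v _ => mul_comm _ _)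
    (fun x => Finset.sum_nonneg fun v _ => mul_self_nonneg _) Finset.univ
  refine ⟨f, hf, ?_⟩
  have htR : (0 : ℝ) < t := by exact_mod_cast ht
  let g : V → ℕ → ℝ := fun v i => (((G.neighborFinset v).filter (fun u => f u = i)).card : ℝ)
  have hg : ∀ v i, g v i = ∑ x, if f x = i then a v x else 0 := by
    intro v i
    simp only [g, a]
    rw [Finset.card_filter, Nat.cast_sum, ← Finset.sum_filter, Finset.sum_ite_mem,
      ← Finset.sum_filter_add_sum_filter_not (G.neighborFinset v) (fun u => f u = i)]
    rw [Finset.sum_congr rfl (g := fun _ => (1 : ℝ)) (by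
      intro x hx; simp [(Finset.mem_filter.mp hx).2])]
    rw [Finset.sum_congr (s₁ := (G.neighborFinset v).filter (fun u => ¬ f u = i)) rfl
      (g := fun _ => (0 : ℝ)) (by
      intro x hx; simp [(Finset.mem_filter.mp hx).2])]
    rw [Finset.sum_const_zero, add_zero]
    congr 1
    ext x; simp [and_comm]
  have hg1 : ∀ v, ∑ i ∈ Finset.range t, g v i = d := by
    intro v
    simp only [hg]
    rw [Finset.sum_comm, ← ha v]
    apply Finset.sum_congr rfl
    intro x _
    rw [Finset.sum_ite_eq]
    simp [hf x]
  have hg2 : ∀ v, ∑ i ∈ Finset.range t, g v i ^ 2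
      = ∑ x, ∑ y, if f x = f y then a v x * a v y else 0 := by
    intro v
    have : ∀ i, g v i ^ 2 = ∑ x, ∑ y, if f x = i then (if f y = i then a v x * a v y else 0) else 0 := by
      intro i
      rw [sq, hg, Finset.sum_mul_sum]
      apply Finset.sum_congr rfl
      intro x _
      apply Finset.sum_congr rfl
      intro y _
      split_ifs <;> simp
    simp only [this]
    rw [Finset.sum_comm]
    apply Finset.sum_congr rfl
    intro x _
    rw [Finset.sum_comm]
    apply Finset.sum_congr rfl
    intro y _
    rw [Finset.sum_ite_eq]
    simp [hf x, eq_comm]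
  have hS : ∑ v, ∑ i ∈ Finset.range t, g v i ^ 2
      = ∑ x, ∑ y, if f x = f y then ∑ v, a v x * a v y else 0 := by
    simp only [hg2]
    rw [Finset.sum_comm]
    apply Finset.sum_congr rfl
    intro x _
    rw [Finset.sum_comm]
    apply Finset.sum_congr rfl
    intro y _
    split_ifs <;> simp
  have hd1 : ∑ x, ∑ v, a v x * a v x = Fintype.card V * d := by
    have : ∀ v x, a v x * a v x = a v x := by intro v x; simp [a]
    simp only [this, ha']
    simp
  have hd2 : ∑ x, ∑ y, ∑ v, a v x * a v y = Fintype.card V * (d : ℝ) ^ 2 := by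
    have : ∑ x, ∑ y, ∑ v, a v x * a v y = ∑ v, (∑ x, a v x) * (∑ y, a v y) := by
      simp only [Finset.sum_mul_sum]
      symm
      rw [Finset.sum_comm]
      apply Finset.sum_congr rfl
      intro x _
      rw [Finset.sum_comm]
    rw [this]
    simp only [ha]
    simp [sq]
  rw [← hS, hd1, hd2] at h
  have hexp : ∑ v : V, ∑ i ∈ Finset.range t, (g v i - (d : ℝ) / t) ^ 2
      = ∑ v, ∑ i ∈ Finset.range t, g v i ^ 2 - Fintype.card V * (d : ℝ) ^ 2 / t := by
    have : ∀ v, ∑ i ∈ Finset.range t, (g v i - (d : ℝ) / t) ^ 2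
        = ∑ i ∈ Finset.range t, g v i ^ 2 - (d : ℝ) ^ 2 / t := by
      intro v
      have : ∀ i, (g v i - (d : ℝ) / t) ^ 2 = g v i ^ 2 - 2 * ((d : ℝ) / t) * g v i + ((d : ℝ) / t) ^ 2 := by
        intro i; ring
      simp only [this, Finset.sum_add_distrib, Finset.sum_sub_distrib, ← Finset.mul_sum, hg1]
      simp
      field_simp
      ring
    simp only [this]
    simp
    ring
  change ∑ v : V, ∑ i ∈ Finset.range t, (g v i - (d : ℝ) / t) ^ 2 ≤ _
  rw [hexp, sub_le_iff_le_add]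
  have : (t : ℝ) * ∑ v, ∑ i ∈ Finset.range t, g v i ^ 2
      ≤ t * (Fintype.card V * d + Fintype.card V * (d : ℝ) ^ 2 / t) := by
    refine h.trans (le_of_eq ?_)
    field_simp
  exact le_of_mul_le_mul_left this htR

lemma exists_good {V : Type*} [Fintype V] [DecidableEq V] (G : SimpleGraph V)
    [DecidableRel G.Adj] (d t : ℕ) (ht : 0 < t) (hG : G.IsRegularOfDegree d) (η : ℝ) (hη : 0 ≤ η) :
    ∃ f : V → ℕ, (∀ v, f v < t) ∧ ∃ W : Finset V,
      (Wᶜ.card : ℝ) * η ^ 2 ≤ Fintype.card V * d ∧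
      ∀ v ∈ W, ∀ i < t,
        |(((G.neighborFinset v).filter (fun u => f u = i)).card : ℝ) - (d : ℝ) / t| ≤ η := by
  classical
  obtain ⟨f, hf, h⟩ := exists_partition G d t ht hG
  refine ⟨f, hf, Finset.univ.filter (fun v => ∀ i < t,
        |(((G.neighborFinset v).filter (fun u => f u = i)).card : ℝ) - (d : ℝ) / t| ≤ η), ?_, ?_⟩
  · refine le_trans ?_ h
    refine le_trans ?_ (Finset.sum_le_sum_of_subset_of_nonneg (Finset.subset_univ
      (Finset.univ.filter (fun v => ∀ i < t,
        |(((G.neighborFinset v).filter (fun u => f u = i)).card : ℝ) - (d : ℝ) / t| ≤ η))ᶜ)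
      (fun _ _ _ => Finset.sum_nonneg fun _ _ => sq_nonneg _))
    rw [← nsmul_eq_mul]
    apply Finset.card_nsmul_le_sum
    intro v hv
    simp only [Finset.mem_compl, Finset.mem_filter, Finset.mem_univ, true_and] at hv
    push Not at hv
    obtain ⟨i, hi, hlt⟩ := hv
    refine le_trans ?_ (Finset.single_le_sum (f := fun i =>
      ((((G.neighborFinset v).filter (fun u => f u = i)).card : ℝ) - (d : ℝ) / t) ^ 2)
      (fun _ _ => sq_nonneg _) (Finset.mem_range.mpr hi))
    rw [← sq_abs (_ - _)]
    exact pow_le_pow_left₀ hη hlt.le 2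
  · intro v hv
    simpa using hv

lemma hall_deficiency {V : Type*} [DecidableEq V] (A : Finset V) (N : V → Finset V)
    (p q : ℝ) (hq : 0 < q) (hpq : p ≤ q) (B : Finset V) (hNB : ∀ a ∈ A, N a ⊆ B)
    (hN : ∀ a ∈ A, p ≤ ((N a).card : ℝ))
    (hB : ∀ b ∈ B, ((A.filter (fun a => b ∈ N a)).card : ℝ) ≤ q) :
    ∃ g : V → Option V, (∀ a ∈ A, ∀ b, g a = some b → b ∈ N a) ∧
      (∀ a ∈ A, ∀ a' ∈ A, ∀ b, g a = some b → g a' = some b → a = a') ∧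
      q * ((A.filter (fun a => g a = none)).card : ℝ) ≤ (q - p) * A.card := by
  classical
  have key : ∀ S ⊆ A, p * S.card ≤ q * ((S.biUnion N).card : ℝ) := by
    intro S hS
    have h1 : p * S.card ≤ ∑ a ∈ S, ((N a).card : ℝ) := by
      rw [mul_comm, ← nsmul_eq_mul]
      exact Finset.card_nsmul_le_sum _ _ _ fun a ha => hN a (hS ha)
    have h2 : ∑ a ∈ S, ((N a).card : ℝ)
        = ∑ b ∈ S.biUnion N, ((S.filter (fun a => b ∈ N a)).card : ℝ) := by
      have := Finset.sum_card_bipartiteAbove_eq_sum_card_bipartiteBelow (s := S)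
        (t := S.biUnion N) (fun a b => b ∈ N a)
      rw [← Nat.cast_sum, ← Nat.cast_sum]
      congr 1
      rw [← show _ = ∑ b ∈ S.biUnion N, (S.filter (fun a => b ∈ N a)).card from this]
      apply Finset.sum_congr rfl
      intro a ha
      congr 1
      ext b
      simp only [Finset.bipartiteAbove, Finset.mem_filter, Finset.mem_biUnion]
      exact ⟨fun h => ⟨⟨a, ha, h⟩, h⟩, fun h => h.2⟩
    rw [h2] at h1
    refine h1.trans ?_
    rw [mul_comm q, ← nsmul_eq_mul]
    apply Finset.sum_le_card_nsmul
    intro b hb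
    rw [Finset.mem_biUnion] at hb
    obtain ⟨a, ha, hab⟩ := hb
    refine le_trans ?_ (hB b (hNB a (hS ha) hab))
    exact_mod_cast Finset.card_le_card (Finset.filter_subset_filter _ hS)
  set k : ℕ := ⌊(q - p) * A.card / q⌋₊ with hk
  have hknn : 0 ≤ (q - p) * A.card / q :=
    div_nonneg (mul_nonneg (sub_nonneg.mpr hpq) (Nat.cast_nonneg _)) hq.le
  have hall : ∀ s : Finset A, s.card ≤
      (s.biUnion (fun a : A => (N a).disjSum (Finset.univ : Finset (Fin k)))).card := by
    intro s
    rcases s.eq_empty_or_nonempty with rfl | ⟨a0, ha0⟩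
    · simp
    have hsub : ((s.biUnion (fun a : A => N a)).disjSum (Finset.univ : Finset (Fin k))) ⊆
        s.biUnion (fun a : A => (N a).disjSum (Finset.univ : Finset (Fin k))) := by
      intro x hx
      rw [Finset.mem_biUnion]
      rcases x with x | x
      · simp only [Finset.inl_mem_disjSum, Finset.mem_biUnion] at hx ⊢
        exact hx
      · exact ⟨a0, ha0, by simp⟩
    refine le_trans ?_ (Finset.card_le_card hsub)
    rw [Finset.card_disjSum, Finset.card_univ, Fintype.card_fin]
    have h3 := key (s.map (Function.Embedding.subtype _)) (by
      intro x hx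
      rw [Finset.mem_map] at hx
      obtain ⟨y, _, rfl⟩ := hx
      exact y.2)
    have hbe : (s.map (Function.Embedding.subtype _)).biUnion N = s.biUnion (fun a : A => N a) := by
      ext x
      simp
    rw [hbe, Finset.card_map] at h3
    have hsA : (s.card : ℝ) ≤ A.card := by
      have := Finset.card_le_univ s
      rw [Fintype.card_coe] at this
      exact_mod_cast this
    suffices s.card - (s.biUnion (fun a : A => N a)).card ≤ k by omega
    apply Nat.le_floor
    rw [le_div_iff₀ hq]
    rcases le_total s.card (s.biUnion (fun a : A => N a)).card with hle | hle
    · rw [Nat.sub_eq_zero_of_le hle]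
      rw [Nat.cast_zero, zero_mul]
      exact mul_nonneg (sub_nonneg.mpr hpq) (Nat.cast_nonneg _)
    · rw [Nat.cast_sub hle]
      have h4 : p * (s.card : ℝ) ≤ q * ((s.biUnion (fun a : A => N a)).card : ℝ) := h3
      have h5 := mul_le_mul_of_nonneg_left hsA (sub_nonneg.mpr hpq)
      linarith
  obtain ⟨φ, hinj, hφ⟩ := (Finset.all_card_le_biUnion_card_iff_exists_injective _).mp hall
  refine ⟨fun v => if h : v ∈ A then (φ ⟨v, h⟩).getLeft? else none, ?_, ?_, ?_⟩
  · intro a ha b hb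
    simp only [ha, dif_pos, Sum.getLeft?_eq_some_iff] at hb
    have := hφ ⟨a, ha⟩
    rw [hb] at this
    simpa using this
  · intro a ha a' ha' b hb hb'
    simp only [ha, ha', dif_pos, Sum.getLeft?_eq_some_iff] at hb hb'
    have := hinj (hb.trans hb'.symm)
    simpa using this
  · have hcard : (A.filter (fun a => (if h : a ∈ A then (φ ⟨a, h⟩).getLeft? else none) = none)).card
        ≤ k := by
      have : (((A.filter (fun a =>
          (if h : a ∈ A then (φ ⟨a, h⟩).getLeft? else none) = none)).attach.image
            (fun a => φ ⟨a.1, (Finset.mem_filter.mp a.2).1⟩))).card ≤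
          ((Finset.univ : Finset (Fin k)).image (Sum.inr : Fin k → V ⊕ Fin k)).card := by
        apply Finset.card_le_card
        intro x hx
        rw [Finset.mem_image] at hx
        obtain ⟨a, _, rfl⟩ := hx
        have h1 := Finset.mem_filter.mp a.2
        have h2 := h1.2
        rw [dif_pos h1.1, Sum.getLeft?_eq_none_iff] at h2
        rw [Sum.isRight_iff] at h2
        obtain ⟨y, hy⟩ := h2
        rw [hy]
        simp
      rw [Finset.card_image_of_injective, Finset.card_attach,
        Finset.card_image_of_injective _ Sum.inr_injective, Finset.card_univ, Fintype.card_fin] at this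
      · exact this
      · intro a b hab
        have h7 := hinj hab
        exact Subtype.ext (congrArg (fun z : A => (z : V)) h7)
    have h6 : ((A.filter (fun a =>
        (if h : a ∈ A then (φ ⟨a, h⟩).getLeft? else none) = none)).card : ℝ) ≤
        (q - p) * A.card / q :=
      le_trans (by exact_mod_cast hcard) (Nat.floor_le hknn)
    rw [le_div_iff₀ hq] at h6
    linarith

lemma path_forest {V : Type*} [DecidableEq V] (G : SimpleGraph V) (f : V → ℕ)
    (g : V → Option V) (W : Finset V)
    (hadj : ∀ v ∈ W, ∀ w, g v = some w → G.Adj v w)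
    (hrank : ∀ v ∈ W, ∀ w, g v = some w → f v < f w)
    (hinj : ∀ v ∈ W, ∀ v' ∈ W, ∀ w, g v = some w → g v' = some w → v = v') :
    ∃ P : Finset (List V),
      (∀ l ∈ P, IsPathList G l) ∧
      (∀ l ∈ P, ∀ l' ∈ P, l ≠ l' → ∀ v, v ∈ l → v ∉ l') ∧
      (∀ v, v ∈ W ↔ ∃ l ∈ P, v ∈ l) ∧
      (∀ w ∈ W, (∀ v ∈ W, g v ≠ some w) → ∃ l, w :: l ∈ P) ∧
      P.card ≤ (W.filter (fun v => ∀ w ∈ W, g v ≠ some w)).card := by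
  classical
  induction W using Finset.induction_on_min_value f with
  | empty => exact ⟨∅, by simp, by simp, by simp, by simp, by simp⟩
  | insert a A ha hmin ih =>
    obtain ⟨P, hP1, hP2, hP3, hP4, hP5⟩ := ih
      (fun v hv => hadj v (Finset.mem_insert_of_mem hv))
      (fun v hv => hrank v (Finset.mem_insert_of_mem hv))
      (fun v hv v' hv' => hinj v (Finset.mem_insert_of_mem hv) v' (Finset.mem_insert_of_mem hv'))
    have hna : ∀ v ∈ insert a A, g v ≠ some a := by
      intro v hv h
      have h1 := hrank v hv a h
      rcases Finset.mem_insert.mp hv with rfl | hv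
      · exact lt_irrefl _ h1
      · exact absurd (hmin v hv) (not_le.mpr h1)
    have hold : A.filter (fun v => ∀ w ∈ insert a A, g v ≠ some w)
        = A.filter (fun v => ∀ w ∈ A, g v ≠ some w) := by
      apply Finset.filter_congr
      intro v hv
      constructor
      · intro h w hw; exact h w (Finset.mem_insert_of_mem hw)
      · intro h w hw
        rcases Finset.mem_insert.mp hw with rfl | hw
        · exact hna v (Finset.mem_insert_of_mem hv)
        · exact h w hw
    have haP : ∀ l ∈ P, a ∉ l := fun l hl hal => ha ((hP3 a).mpr ⟨l, hl, hal⟩)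
    by_cases hga : ∃ w ∈ A, g a = some w
    · obtain ⟨w, hw, hgw⟩ := hga
      obtain ⟨l, hl⟩ := hP4 w hw (by
        intro v hv h
        have := hinj v (Finset.mem_insert_of_mem hv) a (Finset.mem_insert_self _ _) w h hgw
        exact ha (this ▸ hv))
      refine ⟨insert (a :: w :: l) (P.erase (w :: l)), ?_, ?_, ?_, ?_, ?_⟩
      · intro l' hl'
        rcases Finset.mem_insert.mp hl' with rfl | hl'
        · obtain ⟨_, h2, h3⟩ := hP1 _ hl
          refine ⟨by simp, ?_, ?_⟩
          · exact List.isChain_cons_cons.mpr ⟨hadj a (Finset.mem_insert_self _ _) w hgw, h2⟩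
          · exact List.nodup_cons.mpr ⟨haP _ hl, h3⟩
        · exact hP1 _ (Finset.mem_of_mem_erase hl')
      · intro l1 h1 l2 h2 hne v hv1 hv2
        rcases Finset.mem_insert.mp h1 with rfl | h1 <;> rcases Finset.mem_insert.mp h2 with rfl | h2
        · exact hne rfl
        · obtain ⟨h2a, h2b⟩ := Finset.mem_erase.mp h2
          rcases List.mem_cons.mp hv1 with rfl | hv1
          · exact haP _ h2b hv2
          · exact hP2 _ hl _ h2b (Ne.symm h2a) v hv1 hv2
        · obtain ⟨h2a, h2b⟩ := Finset.mem_erase.mp h1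
          rcases List.mem_cons.mp hv2 with rfl | hv2
          · exact haP _ h2b hv1
          · exact hP2 _ hl _ h2b (Ne.symm h2a) v hv2 hv1
        · exact hP2 _ (Finset.mem_of_mem_erase h1) _ (Finset.mem_of_mem_erase h2) hne v hv1 hv2
      · intro v
        rw [Finset.mem_insert, hP3]
        constructor
        · rintro (rfl | ⟨l', hl', hv⟩)
          · exact ⟨_, Finset.mem_insert_self _ _, by simp⟩
          · by_cases h : l' = w :: l
            · subst h
              exact ⟨_, Finset.mem_insert_self _ _, List.mem_cons_of_mem _ hv⟩
            · exact ⟨l', Finset.mem_insert_of_mem (Finset.mem_erase.mpr ⟨h, hl'⟩), hv⟩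
        · rintro ⟨l', hl', hv⟩
          rcases Finset.mem_insert.mp hl' with rfl | hl'
          · rcases List.mem_cons.mp hv with rfl | hv
            · exact Or.inl rfl
            · exact Or.inr ⟨_, hl, hv⟩
          · exact Or.inr ⟨l', Finset.mem_of_mem_erase hl', hv⟩
      · intro u hu hnu
        rcases Finset.mem_insert.mp hu with rfl | hu
        · exact ⟨_, Finset.mem_insert_self _ _⟩
        · obtain ⟨l', hl'⟩ := hP4 u hu (fun v hv => hnu v (Finset.mem_insert_of_mem hv))
          refine ⟨l', Finset.mem_insert_of_mem (Finset.mem_erase.mpr ⟨?_, hl'⟩)⟩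
          intro h
          have : u = w := by simpa using (List.cons.inj h).1
          exact hnu a (Finset.mem_insert_self _ _) (this ▸ hgw)
      · refine (Finset.card_insert_le _ _).trans ?_
        rw [Finset.card_erase_of_mem hl]
        have hpos : 0 < P.card := Finset.card_pos.mpr ⟨_, hl⟩
        rw [Finset.filter_insert, if_neg (by
          push Not
          exact ⟨w, Finset.mem_insert_of_mem hw, hgw⟩), hold]
        omega
    · push Not at hga
      refine ⟨insert [a] P, ?_, ?_, ?_, ?_, ?_⟩
      · intro l' hl'
        rcases Finset.mem_insert.mp hl' with rfl | hl'
        · exact ⟨by simp, List.isChain_singleton _, by simp⟩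
        · exact hP1 _ hl'
      · intro l1 h1 l2 h2 hne v hv1 hv2
        rcases Finset.mem_insert.mp h1 with rfl | h1 <;> rcases Finset.mem_insert.mp h2 with rfl | h2
        · exact hne rfl
        · rw [List.mem_singleton] at hv1; rw [hv1] at hv2; exact haP _ h2 hv2
        · rw [List.mem_singleton] at hv2; rw [hv2] at hv1; exact haP _ h1 hv1
        · exact hP2 _ h1 _ h2 hne v hv1 hv2
      · intro v
        rw [Finset.mem_insert, hP3]
        simp
      · intro u hu hnu
        rcases Finset.mem_insert.mp hu with rfl | hu
        · exact ⟨_, Finset.mem_insert_self _ _⟩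
        · obtain ⟨l', hl'⟩ := hP4 u hu (fun v hv => hnu v (Finset.mem_insert_of_mem hv))
          exact ⟨l', Finset.mem_insert_of_mem hl'⟩
      · refine (Finset.card_insert_le _ _).trans ?_
        rw [Finset.filter_insert, if_pos (by
          intro w hw
          rcases Finset.mem_insert.mp hw with rfl | hw
          · exact hna _ (Finset.mem_insert_self _ _)
          · exact hga w hw), hold, Finset.card_insert_of_notMem (by simp [ha])]
        omega

/-- `G` restricted to edges inside `R`. -/
def restrictTo {V : Type*} (G : SimpleGraph V) (R : Finset V) : SimpleGraph V where
  Adj u v := G.Adj u v ∧ u ∈ R ∧ v ∈ R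
  symm := ⟨fun _ _ h => ⟨h.1.symm, h.2.2, h.2.1⟩⟩
  loopless := ⟨fun _ h => G.loopless.irrefl _ h.1⟩

lemma restrict_reach {V : Type*} (G : SimpleGraph V) (R : Finset V) {a b : V} (ha : a ∈ R)
    (w : (restrictTo G R).Walk a b) : ∀ x ∈ w.support, x ∈ R := by
  induction w with
  | nil => intro x hx; simp at hx; exact hx ▸ ha
  | cons h w ih =>
    intro x hx
    rw [SimpleGraph.Walk.support_cons, List.mem_cons] at hx
    rcases hx with rfl | hx
    · exact ha
    · exact ih h.2.2 x hx

lemma short_path {V : Type*} [Fintype V] [DecidableEq V] (G : SimpleGraph V)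
    [DecidableRel G.Adj] (R : Finset V) (δ : ℝ)
    (hδ : ∀ v ∈ R, δ ≤ ((G.neighborFinset v ∩ R).card : ℝ)) {a b : V} (ha : a ∈ R)
    (hab : (restrictTo G R).Reachable a b) :
    ∃ l : List V, (∀ x ∈ l, x ∈ R) ∧ l.Nodup ∧ l.IsChain G.Adj ∧ l.head? = some a ∧
      l.getLast? = some b ∧ l.length * δ ≤ 3 * R.card := by
  classical
  set H := restrictTo G R with hH
  obtain ⟨w, hw, hlen⟩ := hab.exists_path_of_dist
  have hR := restrict_reach G R ha w
  refine ⟨w.support, hR, hw.support_nodup, ?_, ?_, ?_, ?_⟩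
  · exact w.isChain_adj_support.imp fun _ _ h => h.1
  · rw [List.head?_eq_some_head w.support_ne_nil]; simp
  · rw [List.getLast?_eq_some_getLast w.support_ne_nil]; simp
  · rw [SimpleGraph.Walk.length_support]
    have hdist : ∀ i ≤ w.length, H.dist a (w.getVert i) = i := by
      intro i hi
      have h1 : H.dist a (w.getVert i) ≤ i := by
        refine (SimpleGraph.dist_le (w.take i)).trans ?_
        simp [SimpleGraph.Walk.take_length]
      have h2 : H.dist (w.getVert i) b ≤ w.length - i := by
        refine (SimpleGraph.dist_le (w.drop i)).trans ?_
        rw [SimpleGraph.Walk.drop_length]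
      have h3 := (w.take i).reachable.dist_triangle_left b
      omega
    have hreach : ∀ i, H.Reachable a (w.getVert i) := fun i => (w.take i).reachable
    let N : ℕ → Finset V := fun i => G.neighborFinset (w.getVert i) ∩ R
    have hN : ∀ i ≤ w.length, ∀ x ∈ N i, H.dist a x ≤ i + 1 ∧ i ≤ H.dist a x + 1 := by
      intro i hi x hx
      simp only [N, Finset.mem_inter, SimpleGraph.mem_neighborFinset] at hx
      have hadj : H.Adj (w.getVert i) x := ⟨hx.1, hR _ (w.getVert_mem_support i), hx.2⟩
      have h1 := (hreach i).dist_triangle_left x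
      have h2 := ((hreach i).trans hadj.reachable).dist_triangle_left (w.getVert i)
      have h3 : H.dist (w.getVert i) x = 1 := SimpleGraph.dist_eq_one_iff_adj.mpr hadj
      have h4 : H.dist x (w.getVert i) = 1 := SimpleGraph.dist_eq_one_iff_adj.mpr hadj.symm
      rw [hdist i hi] at h1 h2
      omega
    have hsum : ((w.length + 1 : ℕ) : ℝ) * δ ≤ ∑ i ∈ Finset.range (w.length + 1), ((N i).card : ℝ) := by
      have := Finset.card_nsmul_le_sum (Finset.range (w.length + 1)) (fun i => ((N i).card : ℝ)) δ
        (fun i _ => hδ _ (hR _ (w.getVert_mem_support i)))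
      rwa [Finset.card_range, nsmul_eq_mul] at this
    refine hsum.trans ?_
    have hcount : ∑ i ∈ Finset.range (w.length + 1), (N i).card ≤ 3 * R.card := by
      have h5 := Finset.sum_card_bipartiteAbove_eq_sum_card_bipartiteBelow
        (s := Finset.range (w.length + 1)) (t := R) (fun i x => x ∈ N i)
      have h6 : ∀ i ∈ Finset.range (w.length + 1), (N i).card
          = (R.bipartiteAbove (fun i x => x ∈ N i) i).card := by
        intro i _
        congr 1
        ext x
        simp [Finset.bipartiteAbove, N]
      rw [Finset.sum_congr rfl h6, h5, mul_comm, ← smul_eq_mul]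
      apply Finset.sum_le_card_nsmul
      intro x _
      have : (Finset.range (w.length + 1)).bipartiteBelow (fun i x => x ∈ N i) x ⊆
          {H.dist a x - 1, H.dist a x, H.dist a x + 1} := by
        intro i hi
        simp only [Finset.bipartiteBelow, Finset.mem_filter, Finset.mem_range] at hi
        have := hN i (by omega) x hi.2
        simp only [Finset.mem_insert, Finset.mem_singleton]
        omega
      exact (Finset.card_le_card this).trans Finset.card_le_three
    exact_mod_cast hcount

lemma component_large {V : Type*} [Fintype V] [DecidableEq V] (G : SimpleGraph V)
    [DecidableRel G.Adj] (hG : G.Colorable 2) (R : Finset V) (δ : ℝ) (hδ0 : 0 < δ)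
    (hδ : ∀ v ∈ R, δ ≤ ((G.neighborFinset v ∩ R).card : ℝ)) {a : V} (ha : a ∈ R)
    (C : Finset V) (hC : ∀ x, (restrictTo G R).Reachable a x → x ∈ C) :
    2 * δ ≤ (C.card : ℝ) := by
  classical
  have h1 := hδ a ha
  have : 0 < (G.neighborFinset a ∩ R).card := by
    have := hδ0.trans_le h1
    exact_mod_cast this
  obtain ⟨b, hb⟩ := Finset.card_pos.mp this
  have hb' := Finset.mem_inter.mp hb
  rw [SimpleGraph.mem_neighborFinset] at hb'
  have h2 := hδ b hb'.2
  obtain ⟨col⟩ := hG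
  have hdisj : Disjoint (G.neighborFinset a ∩ R) (G.neighborFinset b ∩ R) := by
    rw [Finset.disjoint_left]
    intro x hx hx'
    simp only [Finset.mem_inter, SimpleGraph.mem_neighborFinset] at hx hx'
    have c1 := col.valid hx.1
    have c2 := col.valid hx'.1
    have c3 := col.valid hb'.1
    omega
  have hab : (restrictTo G R).Adj a b := ⟨hb'.1, ha, hb'.2⟩
  have hsub : (G.neighborFinset a ∩ R) ∪ (G.neighborFinset b ∩ R) ⊆ C := by
    intro x hx
    simp only [Finset.mem_union, Finset.mem_inter, SimpleGraph.mem_neighborFinset] at hx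
    apply hC
    rcases hx with hx | hx
    · exact SimpleGraph.Adj.reachable (G := restrictTo G R) ⟨hx.1, ha, hx.2⟩
    · exact hab.reachable.trans
        (SimpleGraph.Adj.reachable (G := restrictTo G R) ⟨hx.1, hb'.2, hx.2⟩)
  have h3 := Finset.card_le_card hsub
  rw [Finset.card_union_of_disjoint hdisj] at h3
  have h4 : ((G.neighborFinset a ∩ R).card : ℝ) + ((G.neighborFinset b ∩ R).card : ℝ) ≤ C.card := by
    exact_mod_cast h3
  linarith

lemma link {V : Type*} [Fintype V] [DecidableEq V] (G : SimpleGraph V)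
    [DecidableRel G.Adj] (hG : G.Colorable 2) (R : Finset V) (δ : ℝ) (hδ0 : 0 < δ)
    (hδ : ∀ v ∈ R, δ ≤ ((G.neighborFinset v ∩ R).card : ℝ)) (K : ℕ)
    (p : Fin (K + 1) → V) (hp : ∀ j, ∃ a ∈ R, G.Adj (p j) a)
    (hsize : (R.card : ℝ) < (K + 1) * (2 * δ)) :
    ∃ i j, i ≠ j ∧ ∃ l : List V, (∀ x ∈ l, x ∈ R) ∧ l.Nodup ∧ l.IsChain G.Adj ∧
      (∃ a, l.head? = some a ∧ G.Adj (p i) a) ∧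
      (∃ b, l.getLast? = some b ∧ G.Adj (p j) b) ∧ l.length * δ ≤ 3 * R.card := by
  classical
  choose a haR hadj using hp
  by_contra hcon
  have hno : ∀ i j, i ≠ j → ¬ (restrictTo G R).Reachable (a i) (a j) := by
    intro i j hij hr
    obtain ⟨l, h1, h2, h3, h4, h5, h6⟩ := short_path G R δ hδ (haR i) hr
    exact hcon ⟨i, j, hij, l, h1, h2, h3, ⟨_, h4, hadj i⟩, ⟨_, h5, hadj j⟩, h6⟩
  let C : Fin (K + 1) → Finset V :=
    fun j => Finset.univ.filter (fun x => (restrictTo G R).Reachable (a j) x)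
  have hCR : ∀ j, C j ⊆ R := by
    intro j x hx
    simp only [C, Finset.mem_filter, Finset.mem_univ, true_and] at hx
    obtain ⟨w⟩ := hx
    exact restrict_reach G R (haR j) w x (w.end_mem_support)
  have hd : (↑(Finset.univ : Finset (Fin (K + 1))) : Set (Fin (K + 1))).PairwiseDisjoint C := by
    intro i _ j _ hij
    change Disjoint (C i) (C j)
    rw [Finset.disjoint_left]
    intro x hx hx'
    simp only [C, Finset.mem_filter, Finset.mem_univ, true_and] at hx hx'
    exact hno i j hij (hx.trans hx'.symm)
  have h1 : (Finset.univ.biUnion C).card ≤ R.card :=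
    Finset.card_le_card (Finset.biUnion_subset.mpr fun j _ => hCR j)
  rw [Finset.card_biUnion (fun i _ j _ hij => hd (by simp) (by simp) hij)] at h1
  have h2 : ((K + 1 : ℕ) : ℝ) * (2 * δ) ≤ ∑ j, ((C j).card : ℝ) := by
    have := Finset.card_nsmul_le_sum (Finset.univ : Finset (Fin (K + 1)))
      (fun j => ((C j).card : ℝ)) (2 * δ)
      (fun j _ => component_large G hG R δ hδ0 hδ (haR j) (C j) (by intro x hx; simpa [C] using hx))
    rwa [Finset.card_univ, Fintype.card_fin, nsmul_eq_mul] at this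
  have h3 : ∑ j, ((C j).card : ℝ) ≤ R.card := by exact_mod_cast h1
  push_cast at h2
  linarith

lemma merge_paths {V : Type*} [DecidableEq V] (G : SimpleGraph V) (T R : Finset V)
    (hTR : Disjoint T R) (K q ℓ : ℕ)
    (hlink : ∀ U ⊆ R, U.card ≤ q → ∀ p : Fin (K + 1) → V, (∀ j, p j ∈ T) →
      ∃ i j, i ≠ j ∧ ∃ l : List V, (∀ x ∈ l, x ∈ R \ U) ∧ l.Nodup ∧ l.IsChain G.Adj ∧
        (∃ a, l.head? = some a ∧ G.Adj (p i) a) ∧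
        (∃ b, l.getLast? = some b ∧ G.Adj (p j) b) ∧ l.length ≤ ℓ) (m : ℕ) :
    ∀ (P : Finset (List V)) (U : Finset V), U ⊆ R → U.card + m * ℓ ≤ q → P.card ≤ K + m →
      (∀ l ∈ P, IsPathList G l) →
      (∀ l ∈ P, ∀ l' ∈ P, l ≠ l' → ∀ v, v ∈ l → v ∉ l') →
      (∀ l ∈ P, ∀ v ∈ l, v ∈ T ∪ U) →
      (∀ l ∈ P, (∃ a ∈ T, l.head? = some a) ∧ (∃ b ∈ T, l.getLast? = some b)) →
      (∀ v ∈ T, ∃ l ∈ P, v ∈ l) →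
      ∃ P' : Finset (List V), (∀ l ∈ P', IsPathList G l) ∧
        (∀ l ∈ P', ∀ l' ∈ P', l ≠ l' → ∀ v, v ∈ l → v ∉ l') ∧ P'.card ≤ K ∧
        (∀ v ∈ T, ∃ l ∈ P', v ∈ l) := by
  classical
  induction m with
  | zero =>
    intro P U _ _ hc h1 h2 _ _ h5
    exact ⟨P, h1, h2, by simpa using hc, h5⟩
  | succ m ih =>
    intro P U hUR hUq hc h1 h2 h3 h4 h5
    have hmul : (m + 1) * ℓ = m * ℓ + ℓ := by ring
    by_cases hsm : P.card ≤ K + m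
    · exact ih P U hUR (by omega) hsm h1 h2 h3 h4 h5
    obtain ⟨Q, hQP, hQ⟩ := Finset.exists_subset_card_eq (s := P) (n := K + 1) (by omega)
    let e := (Finset.equivFinOfCardEq hQ).symm
    have hmem : ∀ j, (e j : List V) ∈ P := fun j => hQP (e j).2
    choose p hpT hp using fun j => (h4 _ (hmem j)).1
    obtain ⟨i, j, hij, l, hl1, hl2, hl3, ⟨a, hla, hadja⟩, ⟨b, hlb, hadjb⟩, hl6⟩ :=
      hlink U hUR (by omega) p hpT
    have hne : (e i : List V) ≠ e j := by
      intro h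
      exact hij (e.injective (Subtype.ext h))
    have hA := hmem i
    have hB := hmem j
    have hpA := hp i
    have hpB := hp j
    generalize (e i : List V) = A at hne hA hpA
    generalize (e j : List V) = B at hne hB hpB
    have hdl : ∀ L ∈ P, ∀ v ∈ l, v ∉ L := by
      intro L hL v hv hvL
      have hv1 := Finset.mem_sdiff.mp (hl1 v hv)
      rcases Finset.mem_union.mp (h3 L hL v hvL) with h | h
      · exact Finset.disjoint_left.mp hTR h hv1.1
      · exact hv1.2 h
    have hlne : l ≠ [] := by rintro rfl; simp at hla
    set L := A.reverse ++ (l ++ B) with hL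
    have hmemL : ∀ v, v ∈ L ↔ v ∈ A ∨ v ∈ l ∨ v ∈ B := by intro v; simp [hL]
    obtain ⟨hA1, hA2, hA3⟩ := h1 A hA
    obtain ⟨hB1, hB2, hB3⟩ := h1 B hB
    have hLpath : IsPathList G L := by
      refine ⟨by simp [hL, hA1], ?_, ?_⟩
      · change List.IsChain G.Adj L
        rw [hL, List.isChain_append, List.isChain_append]
        refine ⟨?_, ⟨hl3, hB2, ?_⟩, ?_⟩
        · rw [List.isChain_reverse]
          exact List.IsChain.imp (fun _ _ h => SimpleGraph.Adj.symm h) hA2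
        · intro x hx y hy
          rw [hlb] at hx; rw [hpB] at hy
          simp only [Option.mem_def, Option.some.injEq] at hx hy
          subst hx hy
          exact hadjb.symm
        · intro x hx y hy
          rw [List.getLast?_reverse, hpA] at hx
          rw [List.head?_append_of_ne_nil _ hlne, hla] at hy
          simp only [Option.mem_def, Option.some.injEq] at hx hy
          subst hx hy
          exact hadja
      · rw [hL, List.nodup_append', List.nodup_append']
        refine ⟨List.nodup_reverse.mpr hA3, ⟨hl2, hB3, ?_⟩, ?_⟩
        · intro v hv hvB; exact hdl B hB v hv hvB
        · intro v hv hv2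
          rw [List.mem_reverse] at hv
          rcases List.mem_append.mp hv2 with h | h
          · exact hdl A hA v h hv
          · exact h2 A hA B hB hne v hv h
    have herase : ∀ l', l' ∈ (P.erase A).erase B → l' ∈ P ∧ l' ≠ A ∧ l' ≠ B := by
      intro l' h
      simp only [Finset.mem_erase] at h
      tauto
    have hdisjL : ∀ l' ∈ (P.erase A).erase B, ∀ v ∈ L, v ∉ l' := by
      intro l' hl' v hv hv'
      obtain ⟨g1, g2, g3⟩ := herase l' hl'
      rcases (hmemL v).mp hv with h | h | h
      · exact h2 A hA l' g1 g2.symm v h hv'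
      · exact hdl l' g1 v h hv'
      · exact h2 B hB l' g1 g3.symm v h hv'
    refine ih (insert L ((P.erase A).erase B)) (U ∪ l.toFinset) ?_ ?_ ?_ ?_ ?_ ?_ ?_ ?_
    · intro x hx
      rcases Finset.mem_union.mp hx with h | h
      · exact hUR h
      · exact (Finset.mem_sdiff.mp (hl1 x (List.mem_toFinset.mp h))).1
    · have g1 := Finset.card_union_le U l.toFinset
      have g2 := List.toFinset_card_le l
      omega
    · have g1 := Finset.card_insert_le L ((P.erase A).erase B)
      rw [Finset.card_erase_of_mem (Finset.mem_erase.mpr ⟨hne.symm, hB⟩),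
        Finset.card_erase_of_mem hA] at g1
      omega
    · intro l' hl'
      rcases Finset.mem_insert.mp hl' with h | h
      · rw [h]; exact hLpath
      · exact h1 l' (herase l' h).1
    · intro l1 g1 l2 g2 hn v hv1 hv2
      rcases Finset.mem_insert.mp g1 with k1 | k1 <;> rcases Finset.mem_insert.mp g2 with k2 | k2
      · exact hn (k1.trans k2.symm)
      · exact hdisjL l2 k2 v (k1 ▸ hv1) hv2
      · exact hdisjL l1 k1 v (k2 ▸ hv2) hv1
      · exact h2 l1 (herase _ k1).1 l2 (herase _ k2).1 hn v hv1 hv2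
    · intro l' hl' v hv
      rcases Finset.mem_insert.mp hl' with h | h
      · rw [h, hmemL] at hv
        rcases hv with hv | hv | hv
        · have := h3 A hA v hv
          simp only [Finset.mem_union] at this ⊢; tauto
        · simp [hv]
        · have := h3 B hB v hv
          simp only [Finset.mem_union] at this ⊢; tauto
      · have := h3 l' (herase l' h).1 v hv
        simp only [Finset.mem_union] at this ⊢; tauto
    · intro l' hl'
      rcases Finset.mem_insert.mp hl' with h | h
      · obtain ⟨x, hxT, hx⟩ := (h4 A hA).2
        obtain ⟨y, hyT, hy⟩ := (h4 B hB).2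
        refine ⟨⟨x, hxT, ?_⟩, ⟨y, hyT, ?_⟩⟩
        · rw [h, hL, List.head?_append_of_ne_nil _ (by simpa using hA1), List.head?_reverse, hx]
        · rw [h, hL, List.getLast?_append_of_ne_nil _ (by simp [hB1]),
            List.getLast?_append_of_ne_nil _ hB1, hy]
      · exact h4 l' (herase l' h).1
    · intro v hv
      obtain ⟨l', hl', hvl⟩ := h5 v hv
      by_cases gA : l' = A
      · exact ⟨L, Finset.mem_insert_self _ _, (hmemL v).mpr (Or.inl (gA ▸ hvl))⟩
      by_cases gB : l' = B
      · exact ⟨L, Finset.mem_insert_self _ _, (hmemL v).mpr (Or.inr (Or.inr (gB ▸ hvl)))⟩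
      exact ⟨l', Finset.mem_insert_of_mem (Finset.mem_erase.mpr ⟨gB, Finset.mem_erase.mpr ⟨gA, hl'⟩⟩), hvl⟩

lemma core {V : Type*} [Fintype V] [DecidableEq V] (G : SimpleGraph V)
    [DecidableRel G.Adj] (hG : G.Colorable 2) (T R : Finset V) (hTR : Disjoint T R)
    (δ : ℝ) (hδ0 : 0 < δ) (K q ℓ m : ℕ)
    (hdeg : ∀ v ∈ T ∪ R, δ + q ≤ ((G.neighborFinset v ∩ R).card : ℝ))
    (hsize : (R.card : ℝ) < (K + 1) * (2 * δ)) (hℓ : 3 * (R.card : ℝ) ≤ ℓ * δ)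
    (hm : m * ℓ ≤ q) (P : Finset (List V)) (hPm : P.card ≤ m)
    (h1 : ∀ l ∈ P, IsPathList G l)
    (h2 : ∀ l ∈ P, ∀ l' ∈ P, l ≠ l' → ∀ v, v ∈ l → v ∉ l')
    (h3 : ∀ v, v ∈ T ↔ ∃ l ∈ P, v ∈ l) :
    ∃ P' : Finset (List V), (∀ l ∈ P', IsPathList G l) ∧
        (∀ l ∈ P', ∀ l' ∈ P', l ≠ l' → ∀ v, v ∈ l → v ∉ l') ∧ P'.card ≤ K ∧
        (∀ v ∈ T, ∃ l ∈ P', v ∈ l) := by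
  classical
  refine merge_paths G T R hTR K q ℓ ?_ m P ∅ (by simp) (by simpa using hm) (by omega) h1 h2
    ?_ ?_ (fun v hv => (h3 v).mp hv)
  · intro U hUR hUq p hp
    have hd : ∀ v ∈ T ∪ R, δ ≤ ((G.neighborFinset v ∩ (R \ U)).card : ℝ) := by
      intro v hv
      have g1 := hdeg v hv
      have g2 : (G.neighborFinset v ∩ R).card ≤ (G.neighborFinset v ∩ (R \ U)).card + U.card := by
        rw [← Finset.card_union_of_disjoint]
        · apply Finset.card_le_card
          intro x hx
          simp only [Finset.mem_union, Finset.mem_inter, Finset.mem_sdiff] at hx ⊢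
          tauto
        · rw [Finset.disjoint_left]
          intro x hx
          simp only [Finset.mem_inter, Finset.mem_sdiff] at hx
          tauto
      have g3 : ((G.neighborFinset v ∩ R).card : ℝ)
          ≤ (G.neighborFinset v ∩ (R \ U)).card + q := by
        exact_mod_cast g2.trans (by omega)
      linarith
    have hcardR : ((R \ U).card : ℝ) ≤ R.card := by
      exact_mod_cast Finset.card_le_card Finset.sdiff_subset
    obtain ⟨i, j, hij, l, hl1, hl2, hl3, hl4, hl5, hl6⟩ := link G hG (R \ U) δ hδ0
      (fun v hv => hd v (Finset.mem_union_right _ (Finset.mem_sdiff.mp hv).1)) K p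
      (fun j => by
        have g := hδ0.trans_le (hd (p j) (Finset.mem_union_left _ (hp j)))
        have g' : 0 < (G.neighborFinset (p j) ∩ (R \ U)).card := by exact_mod_cast g
        obtain ⟨x, hx⟩ := Finset.card_pos.mp g'
        rw [Finset.mem_inter, SimpleGraph.mem_neighborFinset] at hx
        exact ⟨x, hx.2, hx.1⟩) (by linarith)
    refine ⟨i, j, hij, l, hl1, hl2, hl3, hl4, hl5, ?_⟩
    have : (l.length : ℝ) * δ ≤ ℓ * δ := by linarith
    exact_mod_cast le_of_mul_le_mul_right this hδ0
  · intro l hl v hv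
    rw [Finset.union_empty]
    exact (h3 v).mpr ⟨l, hl, hv⟩
  · intro l hl
    have hne := (h1 l hl).1
    exact ⟨⟨l.head hne, (h3 _).mpr ⟨l, hl, List.head_mem hne⟩, List.head?_eq_some_head hne⟩,
      ⟨l.getLast hne, (h3 _).mpr ⟨l, hl, List.getLast_mem hne⟩,
        List.getLast?_eq_some_getLast hne⟩⟩

lemma part_bounds {V : Type*} [Fintype V] [DecidableEq V] (G : SimpleGraph V)
    [DecidableRel G.Adj] (t : ℕ) (f : V → ℕ) (W : Finset V) (D e : ℝ) (hD : 0 < D)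
    (hW : ∀ v ∈ W, ∀ i < t,
        |(((G.neighborFinset v).filter (fun u => f u = i)).card : ℝ) - D| ≤ e * D)
    (hWc : (Wᶜ.card : ℝ) ≤ e * D) :
    (∀ v ∈ W, ∀ i < t,
      (1 - 2 * e) * D ≤ ((G.neighborFinset v ∩ W.filter (fun u => f u = i)).card : ℝ) ∧
      ((G.neighborFinset v ∩ W.filter (fun u => f u = i)).card : ℝ) ≤ (1 + e) * D) ∧
    (∀ i < t, ((W.filter (fun u => f u = i)).card : ℝ) * t * (1 - 2 * e)
      ≤ (1 + e) * Fintype.card V) := by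
  classical
  have hA : ∀ v ∈ W, ∀ i < t,
      (1 - 2 * e) * D ≤ ((G.neighborFinset v ∩ W.filter (fun u => f u = i)).card : ℝ) ∧
      ((G.neighborFinset v ∩ W.filter (fun u => f u = i)).card : ℝ) ≤ (1 + e) * D := by
    intro v hv i hi
    have h := abs_le.mp (hW v hv i hi)
    have h1 : (G.neighborFinset v ∩ W.filter (fun u => f u = i)).card ≤
        ((G.neighborFinset v).filter (fun u => f u = i)).card := by
      apply Finset.card_le_card
      intro x hx
      simp only [Finset.mem_inter, Finset.mem_filter] at hx ⊢
      tauto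
    have h2 : ((G.neighborFinset v).filter (fun u => f u = i)).card ≤
        (G.neighborFinset v ∩ W.filter (fun u => f u = i)).card + Wᶜ.card := by
      refine le_trans (Finset.card_le_card ?_) (Finset.card_union_le _ _)
      intro x hx
      simp only [Finset.mem_union, Finset.mem_inter, Finset.mem_filter, Finset.mem_compl] at hx ⊢
      tauto
    have h1' : ((G.neighborFinset v ∩ W.filter (fun u => f u = i)).card : ℝ) ≤
        ((G.neighborFinset v).filter (fun u => f u = i)).card := by exact_mod_cast h1
    have h2' : (((G.neighborFinset v).filter (fun u => f u = i)).card : ℝ) ≤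
        (G.neighborFinset v ∩ W.filter (fun u => f u = i)).card + Wᶜ.card := by exact_mod_cast h2
    constructor <;> linarith [h.1, h.2]
  refine ⟨hA, ?_⟩
  intro i hi
  set part : ℕ → Finset V := fun j => W.filter (fun u => f u = j) with hpart
  have hij : ∀ j ∈ Finset.range t,
      ((part i).card : ℝ) * ((1 - 2 * e) * D) ≤ ((part j).card : ℝ) * ((1 + e) * D) := by
    intro j hj
    rw [Finset.mem_range] at hj
    have g1 := Finset.card_nsmul_le_sum (part i)
      (fun v => ((G.neighborFinset v ∩ part j).card : ℝ)) ((1 - 2 * e) * D)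
      (fun v hv => (hA v (Finset.mem_filter.mp hv).1 j hj).1)
    have g2 := Finset.sum_le_card_nsmul (part j)
      (fun v => ((G.neighborFinset v ∩ part i).card : ℝ)) ((1 + e) * D)
      (fun v hv => (hA v (Finset.mem_filter.mp hv).1 i hi).2)
    rw [nsmul_eq_mul] at g1 g2
    refine g1.trans (le_trans (le_of_eq ?_) g2)
    have g3 := Finset.sum_card_bipartiteAbove_eq_sum_card_bipartiteBelow (s := part i)
        (t := part j) (fun a b => G.Adj a b)
    rw [← Nat.cast_sum, ← Nat.cast_sum]
    congr 1
    refine Eq.trans ?_ (g3.trans ?_)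
    · apply Finset.sum_congr rfl
      intro a _
      congr 1
      ext x
      simp [Finset.bipartiteAbove, and_comm]
    · apply Finset.sum_congr rfl
      intro a _
      congr 1
      ext x
      simp [Finset.bipartiteBelow, and_comm, G.adj_comm]
  have hsum := Finset.sum_le_sum hij
  rw [Finset.sum_const, Finset.card_range, nsmul_eq_mul, ← Finset.sum_mul] at hsum
  have htot : ∑ j ∈ Finset.range t, ((part j).card : ℝ) ≤ Fintype.card V := by
    rw [← Nat.cast_sum, ← Finset.card_biUnion]
    · exact_mod_cast Finset.card_le_univ _
    · intro x _ y _ hxy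
      simp only [Function.onFun]
      rw [Finset.disjoint_left]
      intro v hv hv'
      exact hxy ((Finset.mem_filter.mp hv).2.symm.trans (Finset.mem_filter.mp hv').2)
  rcases le_or_gt 0 (1 + e) with he | he
  · have h3 : D * (((part i).card : ℝ) * t * (1 - 2 * e)) ≤ D * ((1 + e) * Fintype.card V) := by
      have h4 := mul_le_mul_of_nonneg_right htot (mul_nonneg he hD.le)
      linarith
    exact le_of_mul_le_mul_left h3 hD
  · exfalso
    have : (0 : ℝ) ≤ Wᶜ.card := Nat.cast_nonneg _
    nlinarith

lemma forest {V : Type*} [Fintype V] [DecidableEq V] (G : SimpleGraph V)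
    [DecidableRel G.Adj] (s t : ℕ) (f : V → ℕ) (hf : ∀ v, f v < t) (W : Finset V) (D e : ℝ)
    (hD : 0 < D) (he : 0 ≤ e)
    (hA : ∀ v ∈ W, ∀ i < t,
      (1 - 2 * e) * D ≤ ((G.neighborFinset v ∩ W.filter (fun u => f u = i)).card : ℝ) ∧
      ((G.neighborFinset v ∩ W.filter (fun u => f u = i)).card : ℝ) ≤ (1 + e) * D) :
    ∃ P : Finset (List V),
      (∀ l ∈ P, IsPathList G l) ∧
      (∀ l ∈ P, ∀ l' ∈ P, l ≠ l' → ∀ v, v ∈ l → v ∉ l') ∧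
      (∀ v, v ∈ W.filter (fun u => s ≤ f u) ↔ ∃ l ∈ P, v ∈ l) ∧
      (P.card : ℝ) ≤ ((W.filter (fun u => f u = t - 1)).card : ℝ) + 3 * e * Fintype.card V := by
  classical
  set part : ℕ → Finset V := fun j => W.filter (fun u => f u = j) with hpart
  have hmp : ∀ j v, v ∈ part j ↔ v ∈ W ∧ f v = j := by intro j v; simp [hpart]
  have hall : ∀ i, ∃ g : V → Option V, i + 1 < t →
      (∀ a ∈ part i, ∀ b, g a = some b → b ∈ G.neighborFinset a ∩ part (i + 1)) ∧
      (∀ a ∈ part i, ∀ a' ∈ part i, ∀ b, g a = some b → g a' = some b → a = a') ∧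
      (1 + e) * D * (((part i).filter (fun a => g a = none)).card : ℝ)
        ≤ ((1 + e) * D - (1 - 2 * e) * D) * (part i).card := by
    intro i
    by_cases hi : i + 1 < t
    · obtain ⟨g, hg⟩ := hall_deficiency (part i) (fun a => G.neighborFinset a ∩ part (i + 1))
        ((1 - 2 * e) * D) ((1 + e) * D) (by positivity) (by nlinarith) (part (i + 1))
        (fun a _ => Finset.inter_subset_right)
        (fun a ha => (hA a ((hmp _ _).mp ha).1 (i + 1) hi).1)
        (fun b hb => by
          have := (hA b ((hmp _ _).mp hb).1 i (by omega)).2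
          refine le_trans ?_ this
          have hsub : (part i).filter (fun a => b ∈ G.neighborFinset a ∩ part (i + 1)) ⊆
              G.neighborFinset b ∩ part i := by
            intro x hx
            simp only [Finset.mem_filter, Finset.mem_inter, SimpleGraph.mem_neighborFinset] at hx ⊢
            exact ⟨hx.2.1.symm, hx.1⟩
          exact_mod_cast Finset.card_le_card hsub)
      exact ⟨g, fun _ => hg⟩
    · exact ⟨fun _ => none, fun h => absurd h hi⟩
  choose g hg using hall
  let γ : V → Option V := fun v => if f v + 1 < t then g (f v) v else none
  have hγ : ∀ v ∈ W, ∀ w, γ v = some w → f v + 1 < t ∧ g (f v) v = some w ∧ G.Adj v w ∧ w ∈ W ∧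
      f w = f v + 1 := by
    intro v hv w hw
    simp only [γ] at hw
    split_ifs at hw with hlt
    have h1 := (hg (f v) hlt).1 v ((hmp _ _).mpr ⟨hv, rfl⟩) w hw
    rw [Finset.mem_inter, SimpleGraph.mem_neighborFinset, hmp] at h1
    exact ⟨hlt, hw, h1.1, h1.2.1, h1.2.2⟩
  set T := W.filter (fun u => s ≤ f u) with hT
  have hTW : ∀ v ∈ T, v ∈ W := fun v hv => (Finset.mem_filter.mp hv).1
  obtain ⟨P, hP1, hP2, hP3, _, hP5⟩ := path_forest G f γ T
    (fun v hv w hw => (hγ v (hTW v hv) w hw).2.2.1)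
    (fun v hv w hw => by have := (hγ v (hTW v hv) w hw).2.2.2.2; omega)
    (fun v hv v' hv' w hw hw' => by
      have h1 := hγ v (hTW v hv) w hw
      have h2 := hγ v' (hTW v' hv') w hw'
      have hff : f v = f v' := by omega
      have h3 := h2.2.1
      rw [← hff] at h3
      exact (hg (f v) h1.1).2.1 v ((hmp _ _).mpr ⟨hTW v hv, rfl⟩) v'
        ((hmp _ _).mpr ⟨hTW v' hv', hff.symm⟩) w h1.2.1 h3)
  refine ⟨P, hP1, hP2, hP3, ?_⟩
  have hsub : T.filter (fun v => ∀ w ∈ T, γ v ≠ some w) ⊆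
      part (t - 1) ∪ (Finset.range (t - 1)).biUnion
        (fun i => (part i).filter (fun a => g i a = none)) := by
    intro v hv
    rw [Finset.mem_filter] at hv
    have hvW := hTW v hv.1
    rw [Finset.mem_union, hmp, Finset.mem_biUnion]
    by_cases hlt : f v + 1 < t
    · right
      refine ⟨f v, by rw [Finset.mem_range]; omega, ?_⟩
      rw [Finset.mem_filter, hmp]
      refine ⟨⟨hvW, rfl⟩, ?_⟩
      by_contra hne
      obtain ⟨w, hw⟩ := Option.ne_none_iff_exists'.mp hne
      have hγw : γ v = some w := by simp only [γ]; rw [if_pos hlt, hw]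
      have h1 := hγ v hvW w hγw
      have hs : s ≤ f v := (Finset.mem_filter.mp hv.1).2
      exact hv.2 w (Finset.mem_filter.mpr ⟨h1.2.2.2.1, by omega⟩) hγw
    · left
      have := hf v
      exact ⟨hvW, by omega⟩
  have hP5b : P.card ≤ (T.filter (fun v => ∀ w ∈ T, γ v ≠ some w)).card := by convert hP5
  have hcard := hP5b.trans ((Finset.card_le_card hsub).trans ((Finset.card_union_le _ _).trans
    (Nat.add_le_add_left Finset.card_biUnion_le _)))
  have hcard' : (P.card : ℝ) ≤ ((part (t - 1)).card : ℝ) +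
      ∑ i ∈ Finset.range (t - 1), (((part i).filter (fun a => g i a = none)).card : ℝ) := by
    exact_mod_cast hcard
  refine hcard'.trans ?_
  have hunm : ∀ i ∈ Finset.range (t - 1),
      (((part i).filter (fun a => g i a = none)).card : ℝ) ≤ 3 * e * (part i).card := by
    intro i hi
    rw [Finset.mem_range] at hi
    have h1 := (hg i (by omega)).2.2
    have h2 : D * (((part i).filter (fun a => g i a = none)).card : ℝ)
        ≤ D * (3 * e * (part i).card) := by
      have h3 : (0 : ℝ) ≤ e * D * (((part i).filter (fun a => g i a = none)).card : ℝ) := by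
        positivity
      linarith
    exact le_of_mul_le_mul_left h2 hD
  have htot : ∑ j ∈ Finset.range (t - 1), ((part j).card : ℝ) ≤ Fintype.card V := by
    rw [← Nat.cast_sum, ← Finset.card_biUnion]
    · exact_mod_cast Finset.card_le_univ _
    · intro x _ y _ hxy
      simp only [Function.onFun]
      rw [Finset.disjoint_left]
      intro v hv hv'
      exact hxy ((Finset.mem_filter.mp hv).2.symm.trans (Finset.mem_filter.mp hv').2)
  have hs := Finset.sum_le_sum hunm
  rw [← Finset.mul_sum] at hs
  have := mul_le_mul_of_nonneg_left htot (by positivity : (0 : ℝ) ≤ 3 * e)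
  linarith

lemma reservoir {V : Type*} [DecidableEq V] (s : ℕ) (f : V → ℕ) (W A : Finset V) :
    ((A ∩ W.filter (fun u => f u < s)).card : ℝ)
      = ∑ i ∈ Finset.range s, ((A ∩ W.filter (fun u => f u = i)).card : ℝ) := by
  classical
  rw [← Nat.cast_sum, ← Finset.card_biUnion]
  · congr 2
    ext x
    simp only [Finset.mem_inter, Finset.mem_filter, Finset.mem_biUnion, Finset.mem_range]
    constructor
    · rintro ⟨h1, h2, h3⟩; exact ⟨f x, h3, h1, h2, rfl⟩
    · rintro ⟨i, h3, h1, h2, rfl⟩; exact ⟨h1, h2, h3⟩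
  · intro x _ y _ hxy
    simp only [Function.onFun]
    rw [Finset.disjoint_left]
    intro v hv hv'
    simp only [Finset.mem_inter, Finset.mem_filter] at hv hv'
    exact hxy (hv.2.2.symm.trans hv'.2.2)

set_option maxHeartbeats 4000000

/-- Theorem 1(2): for `c ∈ (0,1]`, `α > 0` and `n` large, every bipartite
`⌈cn⌉`-regular graph on `n` vertices has at most `⌊1/(2c)⌋` vertex-disjoint paths
covering all but at most `αn` vertices. -/
theorem stmt_17 (c α : ℝ) (hc0 : 0 < c) (hc1 : c ≤ 1) (hα : 0 < α) :
    ∃ n₀ : ℕ, ∀ n : ℕ, n₀ ≤ n →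
      ∀ (V : Type) [Fintype V] [DecidableEq V] (G : SimpleGraph V) [DecidableRel G.Adj],
        Fintype.card V = n → G.IsRegularOfDegree ⌈c * n⌉₊ → G.Colorable 2 →
        ∃ P : Finset (List V),
          (∀ l ∈ P, IsPathList G l) ∧
          (∀ l ∈ P, ∀ l' ∈ P, l ≠ l' → ∀ v, v ∈ l → v ∉ l') ∧
          P.card ≤ ⌊1 / (2 * c)⌋₊ ∧
          ((Finset.univ.filter (fun v : V => ∀ l ∈ P, v ∉ l)).card : ℝ) ≤ α * n := by
  classical
  set K := ⌊1 / (2 * c)⌋₊ with hK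
  have hθ : 1 < 2 * c * (K + 1) := by
    have := Nat.lt_floor_add_one (1 / (2 * c))
    rw [← hK, div_lt_iff₀ (by positivity)] at this
    linarith
  obtain ⟨θ, hθdef⟩ : ∃ θ, θ = 2 * c * ((K : ℝ) + 1) := ⟨_, rfl⟩
  rw [← hθdef] at hθ
  obtain ⟨ε, hε0, hε1, hεθ⟩ : ∃ ε : ℝ, 0 < ε ∧ ε ≤ 1 / 10 ∧ ε * (5 * θ + 1) < θ - 1 := by
    refine ⟨min (1 / 10) ((θ - 1) / (5 * θ + 1) / 2), ?_, min_le_left _ _, ?_⟩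
    · have : 0 < (θ - 1) / (5 * θ + 1) / 2 := by
        apply div_pos (div_pos _ _) <;> linarith
      exact lt_min (by norm_num) this
    · have h1 : 0 < 5 * θ + 1 := by linarith
      have h2 := mul_le_mul_of_nonneg_right
        (min_le_right (1 / 10) ((θ - 1) / (5 * θ + 1) / 2)) h1.le
      have h3 : (θ - 1) / (5 * θ + 1) / 2 * (5 * θ + 1) = (θ - 1) / 2 := by field_simp
      linarith
  obtain ⟨ℓ, hℓ⟩ : ∃ ℓ : ℕ, 12 / c ≤ ℓ := exists_nat_ge _
  obtain ⟨s, hs⟩ : ∃ s : ℕ, 5 * ℓ / (ε * c) + 1 ≤ (s : ℝ) := exists_nat_ge _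
  obtain ⟨t, ht⟩ : ∃ t : ℕ, 4 * s / α + s + 1 ≤ (t : ℝ) := exists_nat_ge _
  have hs1 : (1 : ℝ) ≤ s := by
    have : 0 ≤ 5 * ℓ / (ε * c) := by positivity
    linarith
  have hs2 : 5 * ℓ ≤ ε * s * c := by
    have h1 : 5 * ℓ / (ε * c) ≤ s := by linarith
    rw [div_le_iff₀ (by positivity)] at h1
    linarith
  have hst : (s : ℝ) + 1 ≤ t := by
    have : 0 ≤ 4 * s / α := by positivity
    linarith
  have hst' : s + 1 ≤ t := by exact_mod_cast hst
  have ht1 : (1 : ℝ) ≤ t := by linarith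
  have ht0 : (0 : ℝ) < t := by linarith
  have htα : 4 * s ≤ α * t := by
    have h1 : 4 * s / α ≤ t := by linarith
    rw [div_le_iff₀ hα] at h1
    linarith
  obtain ⟨e, he0, heε, het⟩ : ∃ e : ℝ, 0 < e ∧ e ≤ ε ∧ e * t ≤ 1 := by
    refine ⟨min ε (1 / t), lt_min hε0 (by positivity), min_le_left _ _, ?_⟩
    have := mul_le_mul_of_nonneg_right (min_le_right ε (1 / (t : ℝ))) ht0.le
    rwa [one_div_mul_cancel ht0.ne'] at this
  obtain ⟨n₀, hn₀⟩ : ∃ n₀ : ℕ, (t : ℝ) ^ 3 / (e ^ 3 * c ^ 2) + 1 ≤ n₀ := exists_nat_ge _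
  refine ⟨n₀, ?_⟩
  intro n hn V _ _ G _ hcard hreg hcol
  set d := ⌈c * n⌉₊ with hd
  have hnR : (t : ℝ) ^ 3 / (e ^ 3 * c ^ 2) + 1 ≤ n := hn₀.trans (by exact_mod_cast hn)
  have hn1 : (1 : ℝ) ≤ n := by
    have : 0 ≤ (t : ℝ) ^ 3 / (e ^ 3 * c ^ 2) := by positivity
    linarith
  have hn3 : (t : ℝ) ^ 3 ≤ n * (e ^ 3 * c ^ 2) := by
    rw [← div_le_iff₀ (by positivity)]
    linarith
  have hdc : c * n ≤ d := Nat.le_ceil _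
  have hcn : 0 < c * n := by positivity
  have hd0 : (0 : ℝ) < d := by linarith
  have hdn : (d : ℝ) ≤ n := by
    have h1 : d ≤ n := by
      rw [hd]
      apply Nat.ceil_le.mpr
      nlinarith
    exact_mod_cast h1
  obtain ⟨D, hDdef⟩ : ∃ D : ℝ, D = d / t := ⟨_, rfl⟩
  have hD0 : 0 < D := by rw [hDdef]; positivity
  have hDt : D * t = d := by rw [hDdef]; field_simp
  obtain ⟨f, hf, W, hWc, hW⟩ := exists_good G d t (by omega) hreg (e * D) (by positivity)
  rw [← hDdef] at hW
  rw [hcard] at hWc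
  have hWc' : (Wᶜ.card : ℝ) ≤ e * D := by
    have hpos : 0 < (e * D) ^ 2 := by positivity
    refine le_of_mul_le_mul_right (hWc.trans ?_) hpos
    have h1 : (n : ℝ) * d * t ^ 3 ≤ (e * (e * D) ^ 2 * D) * t ^ 3 := by
      have h2 : (e * (e * D) ^ 2 * D) * t ^ 3 = e ^ 3 * (D * t) ^ 3 := by ring
      rw [h2, hDt]
      have h3 : (c * n) ^ 2 ≤ (d : ℝ) ^ 2 := pow_le_pow_left₀ hcn.le hdc 2
      calc (n : ℝ) * d * t ^ 3 ≤ n * d * (n * (e ^ 3 * c ^ 2)) := by gcongr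
        _ = e ^ 3 * d * (c * n) ^ 2 := by ring
        _ ≤ e ^ 3 * d * d ^ 2 := by gcongr
        _ = e ^ 3 * d ^ 3 := by ring
    have h4 := le_of_mul_le_mul_right h1 (by positivity)
    linarith
  obtain ⟨hA, hB⟩ := part_bounds G t f W D e hD0 hW hWc'
  rw [hcard] at hB
  obtain ⟨P, hP1, hP2, hP3, hP4⟩ := forest G s t f hf W D e hD0 he0.le hA
  rw [hcard] at hP4
  -- sizes of the parts
  have hB' : ∀ i < t, ((W.filter (fun u => f u = i)).card : ℝ) * t * (1 - 2 * ε)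
      ≤ (1 + ε) * n := by
    intro i hi
    have h1 := hB i hi
    have h2 : ((W.filter (fun u => f u = i)).card : ℝ) * t * (1 - 2 * ε) ≤
        ((W.filter (fun u => f u = i)).card : ℝ) * t * (1 - 2 * e) := by
      gcongr
    have h3 : (1 + e) * (n : ℝ) ≤ (1 + ε) * n := by gcongr
    linarith
  have hB2 : ∀ i < t, ((W.filter (fun u => f u = i)).card : ℝ) * t ≤ 2 * n := by
    intro i hi
    have h1 := hB' i hi
    have h2 : (0 : ℝ) ≤ ((W.filter (fun u => f u = i)).card : ℝ) * t := by positivity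
    nlinarith
  set R := W.filter (fun u => f u < s) with hR
  set T := W.filter (fun u => s ≤ f u) with hT
  have hRsum := reservoir s f W Finset.univ
  simp only [Finset.univ_inter] at hRsum
  rw [← hR] at hRsum
  have hRt : (R.card : ℝ) * t * (1 - 2 * ε) ≤ s * ((1 + ε) * n) := by
    rw [hRsum, Finset.sum_mul, Finset.sum_mul]
    have := Finset.sum_le_card_nsmul (Finset.range s)
      (fun i => ((W.filter (fun u => f u = i)).card : ℝ) * t * (1 - 2 * ε)) ((1 + ε) * n)
      (fun i hi => hB' i (by rw [Finset.mem_range] at hi; omega))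
    rwa [Finset.card_range, nsmul_eq_mul] at this
  have hRt2 : (R.card : ℝ) * t ≤ s * (2 * n) := by
    rw [hRsum, Finset.sum_mul]
    have := Finset.sum_le_card_nsmul (Finset.range s)
      (fun i => ((W.filter (fun u => f u = i)).card : ℝ) * t) (2 * n)
      (fun i hi => hB2 i (by rw [Finset.mem_range] at hi; omega))
    rwa [Finset.card_range, nsmul_eq_mul] at this
  have hdegR : ∀ v ∈ W, s * ((1 - 2 * ε) * D) ≤ ((G.neighborFinset v ∩ R).card : ℝ) := by
    intro v hv
    rw [hR, reservoir]
    have := Finset.card_nsmul_le_sum (Finset.range s)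
      (fun i => ((G.neighborFinset v ∩ W.filter (fun u => f u = i)).card : ℝ)) ((1 - 2 * ε) * D)
      (fun i hi => by
        refine le_trans ?_ (hA v hv i (by rw [Finset.mem_range] at hi; omega)).1
        gcongr)
    rwa [Finset.card_range, nsmul_eq_mul] at this
  have hTR : Disjoint T R := by
    rw [Finset.disjoint_left]
    intro v hv hv'
    have h1 := (Finset.mem_filter.mp hv).2
    have h2 := (Finset.mem_filter.mp hv').2
    omega
  have hs0 : (0 : ℝ) < s := by linarith
  have hDc : c * n ≤ D * t := by rw [hDt]; exact hdc
  obtain ⟨δ, hδ⟩ : ∃ δ : ℝ, δ = s * ((1 - 3 * ε) * D) := ⟨_, rfl⟩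
  have hδhalf : s * D ≤ 2 * δ := by
    rw [hδ]
    have : 0 < s * D := by positivity
    nlinarith
  have hδ0 : 0 < δ := by
    have : 0 < s * D := by positivity
    linarith
  have hPt : (P.card : ℝ) * t ≤ 5 * n := by
    have h1 := mul_le_mul_of_nonneg_right hP4 ht0.le
    have h2 := hB2 (t - 1) (by omega)
    have h3 : e * t * n ≤ 1 * n := by gcongr
    linarith
  have hcore := core G hcol T R hTR δ hδ0 K ⌊ε * s * D⌋₊ ℓ P.card ?_ ?_ ?_ ?_ P le_rfl hP1 hP2 hP3
  · obtain ⟨P', h1, h2, h3, h4⟩ := hcore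
    refine ⟨P', h1, h2, h3, ?_⟩
    have hsub : (Finset.univ.filter (fun v : V => ∀ l ∈ P', v ∉ l)) ⊆ R ∪ Wᶜ := by
      intro v hv
      simp only [Finset.mem_filter, Finset.mem_univ, true_and] at hv
      rw [Finset.mem_union, Finset.mem_compl]
      by_contra hcon
      push Not at hcon
      have hvT : v ∈ T := by
        rw [hT, Finset.mem_filter]
        refine ⟨hcon.2, ?_⟩
        by_contra hlt
        exact hcon.1 (Finset.mem_filter.mpr ⟨hcon.2, by omega⟩)
      obtain ⟨l, hl, hvl⟩ := h4 v hvT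
      exact hv l hl hvl
    have h5 : ((Finset.univ.filter (fun v : V => ∀ l ∈ P', v ∉ l)).card : ℝ)
        ≤ R.card + Wᶜ.card := by
      exact_mod_cast (Finset.card_le_card hsub).trans (Finset.card_union_le _ _)
    refine h5.trans ?_
    have h6 : ((R.card : ℝ) + Wᶜ.card) * t ≤ (α * n) * t := by
      have h7 : (Wᶜ.card : ℝ) * t ≤ n := by
        have h8 := mul_le_mul_of_nonneg_right hWc' ht0.le
        have h9 : e * D * t ≤ 1 * (D * t) := by
          rw [mul_assoc]
          have : 0 < D * t := by positivity
          have : e ≤ 1 := by linarith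
          gcongr
        linarith
      have h10 : 4 * s * (n : ℝ) ≤ α * t * n := by gcongr
      have h11 : 1 * (n : ℝ) ≤ s * n := by gcongr
      linarith
    exact le_of_mul_le_mul_right h6 ht0
  · intro v hv
    have hvW : v ∈ W := by
      rcases Finset.mem_union.mp hv with h | h
      · exact (Finset.mem_filter.mp h).1
      · exact (Finset.mem_filter.mp h).1
    refine le_trans ?_ (hdegR v hvW)
    have := Nat.floor_le (show 0 ≤ ε * s * D by positivity)
    rw [hδ]
    linarith
  · have h1 : (0 : ℝ) < 1 - 2 * ε := by linarith
    have h2 : (R.card : ℝ) * (t * (1 - 2 * ε)) < ((K + 1) * (2 * δ)) * (t * (1 - 2 * ε)) := by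
      refine lt_of_le_of_lt (by linarith [hRt] : _ ≤ s * ((1 + ε) * (n : ℝ))) ?_
      have h3 : ((K + 1) * (2 * δ)) * (t * (1 - 2 * ε))
          = 2 * (K + 1) * s * ((1 - 3 * ε) * (1 - 2 * ε)) * (D * t) := by rw [hδ]; ring
      rw [h3]
      have h4 : 0 < 1 - 3 * ε := by linarith
      have h5 : 2 * (K + 1) * s * ((1 - 3 * ε) * (1 - 2 * ε)) * (c * n)
          ≤ 2 * (K + 1) * s * ((1 - 3 * ε) * (1 - 2 * ε)) * (D * t) := by gcongr
      refine lt_of_lt_of_le ?_ h5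
      have h6 : 2 * (K + 1) * s * ((1 - 3 * ε) * (1 - 2 * ε)) * (c * n)
          = s * ((θ * ((1 - 3 * ε) * (1 - 2 * ε))) * n) := by rw [hθdef]; ring
      rw [h6]
      have h7 : 1 + ε < θ * ((1 - 3 * ε) * (1 - 2 * ε)) := by nlinarith [mul_pos hε0 hε0]
      have hn0 : (0 : ℝ) < n := by linarith
      gcongr
    exact lt_of_mul_lt_mul_right h2 (by positivity)
  · have h1 : (3 * (R.card : ℝ)) * t ≤ (ℓ * δ) * t := by
      have h2 : 12 ≤ ℓ * c := by rwa [div_le_iff₀ hc0] at hℓ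
      have h3 : ℓ * (s * (c * n)) ≤ ℓ * (s * (D * t)) := by gcongr
      have h4 : ℓ * (s * D) * t ≤ ℓ * (2 * δ) * t := by gcongr
      have h5 : 12 * (s * (n : ℝ)) ≤ ℓ * c * (s * n) := by gcongr
      linarith
    exact le_of_mul_le_mul_right h1 ht0
  · apply Nat.le_floor
    push_cast
    have h1 : ((P.card : ℝ) * ℓ) * t ≤ (ε * s * D) * t := by
      have h2 : (P.card : ℝ) * t * ℓ ≤ 5 * n * ℓ := by gcongr
      have h3 : 5 * ℓ * (n : ℝ) ≤ ε * s * c * n := by gcongr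
      have h4 : ε * s * (c * n) ≤ ε * s * (D * t) := by gcongr
      linarith
    exact le_of_mul_le_mul_right h1 ht0
end

section
/- For all reals c, α > 0 there exist ε > 0 and an integer C > 0 such that for all sufficiently large n: if G is a graph on n vertices with (1-ε)cn ≤ deg(v) ≤ (1+ε)cn for every vertex v, then G contains at most C vertex-disjoint cycles whose union covers all but at most αn vertices of G. -/
open Finset

/-- A list of vertices forms a cycle in `G`: at least 3 distinct vertices,
consecutive vertices adjacent, and the last vertex adjacent to the first. -/
def IsCycleList {V : Type*} (G : SimpleGraph V) (l : List V) : Prop :=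
  3 ≤ l.length ∧ l.Nodup ∧ l.Chain' G.Adj ∧
    ∀ h : l ≠ [], G.Adj (l.getLast h) (l.head h)

theorem dfs_aux {V : Type} [DecidableEq V] (R : V → V → Prop) (hR : ∀ x y, R x y → R y x)
    (X : Finset V) : ∀ p, p ≤ X.card → ∃ (s : List V) (T : Finset V), s.Nodup ∧ s.IsChain R ∧
      (∀ v ∈ s, v ∈ X) ∧ T ⊆ X ∧ (∀ v ∈ s, v ∉ T) ∧
      (∀ t ∈ T, ∀ u ∈ X, u ∉ T → u ∉ s → ¬ R t u) ∧ 2 * T.card + s.length = p := by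
  intro p
  induction p with
  | zero => intro _; exact ⟨[], ∅, by simp⟩
  | succ p ih =>
    intro hp
    obtain ⟨s, T, hs, hc, hsX, hTX, hsT, hno, hcard⟩ := ih (by omega)
    have hex : ∃ u ∈ X, u ∉ T ∧ u ∉ s := by
      by_contra hcon
      push Not at hcon
      have h1 : X ⊆ T ∪ s.toFinset := by
        intro u hu
        by_cases h : u ∈ T
        · simp [h]
        · simp [hcon u hu h]
      have h2 := Finset.card_le_card h1
      have h3 := Finset.card_union_le T s.toFinset
      have h4 := List.toFinset_card_le s
      omega
    cases s with
    | nil =>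
      obtain ⟨u, huX, huT, -⟩ := hex
      refine ⟨[u], T, by simp, by simp, by simpa using huX, hTX, by simpa using huT, ?_, ?_⟩
      · intro t ht w hw hwT _
        exact hno t ht w hw hwT (by simp)
      · simp at hcard ⊢; omega
    | cons x s =>
      by_cases hpush : ∃ u ∈ X, u ∉ T ∧ u ∉ x :: s ∧ R u x
      · obtain ⟨u, huX, huT, hus, hux⟩ := hpush
        refine ⟨u :: x :: s, T, List.nodup_cons.2 ⟨hus, hs⟩, ?_, ?_, hTX, ?_, ?_, ?_⟩
        · exact List.isChain_cons_cons.2 ⟨hux, hc⟩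
        · intro v hv
          rcases List.mem_cons.1 hv with rfl | hv
          · exact huX
          · exact hsX v hv
        · intro v hv
          rcases List.mem_cons.1 hv with rfl | hv
          · exact huT
          · exact hsT v hv
        · intro t ht w hw hwT hws
          exact hno t ht w hw hwT (fun h => hws (List.mem_cons_of_mem _ h))
        · simp at hcard ⊢; omega
      · push Not at hpush
        have hxT : x ∉ T := hsT x (by simp)
        refine ⟨s, insert x T, (List.nodup_cons.1 hs).2, ?_, ?_, ?_, ?_, ?_, ?_⟩
        · exact hc.tail
        · exact fun v hv => hsX v (List.mem_cons_of_mem _ hv)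
        · exact Finset.insert_subset (hsX x (by simp)) hTX
        · intro v hv hv'
          rcases Finset.mem_insert.1 hv' with rfl | h
          · exact (List.nodup_cons.1 hs).1 hv
          · exact hsT v (List.mem_cons_of_mem _ hv) h
        · intro t ht w hw hwT hws hR'
          have hwx : w ≠ x := fun h => hwT (by simp [h])
          have hwT' : w ∉ T := fun h => hwT (by simp [h])
          have hws' : w ∉ x :: s := by simp [hwx, hws]
          rcases Finset.mem_insert.1 ht with rfl | h
          · exact hpush w hw hwT' hws' (hR _ _ hR')
          · exact hno t h w hw hwT' hws' hR'
        · rw [Finset.card_insert_of_notMem hxT]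
          simp at hcard ⊢; omega

theorem alt_count {V : Type} [DecidableEq V] (A : Finset V) : ∀ (n : ℕ) (s : List V),
    s.length = n → s.IsChain (fun x y => (x ∈ A ↔ y ∉ A)) →
      2 * (s.filter (· ∈ A)).length ≤ n + 1 ∧ n ≤ 2 * (s.filter (· ∈ A)).length + 1 := by
  intro n
  induction n using Nat.strong_induction_on with
  | _ n ih =>
    intro s hs hc
    match s, hs, hc with
    | [], hs, hc => simp at hs ⊢; omega
    | [x], hs, hc =>
      simp at hs
      by_cases h : x ∈ A <;> simp [h] <;> omega
    | x :: y :: s, hs, hc =>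
      have h1 := List.isChain_cons_cons.1 hc
      have h2 := ih s.length (by simp at hs; omega) s rfl h1.2.tail
      simp at hs
      by_cases h : x ∈ A
      · have hy : y ∉ A := h1.1.1 h
        simp [h, hy]; omega
      · have hy : y ∈ A := by
          by_contra hy; exact h (h1.1.2 hy)
        simp [h, hy]; omega

theorem pair_cycle {V : Type} [DecidableEq V] (G : SimpleGraph V) (A B : Finset V) (m K : ℕ)
    (hAB : Disjoint A B) (hA : A.card = m) (hB : B.card = m) (hK : 1 ≤ K) (hKm : 4 * K < m)
    (hE : ∀ A' ⊆ A, ∀ B' ⊆ B, K ≤ A'.card → K ≤ B'.card → ∃ a ∈ A', ∃ b ∈ B', G.Adj a b) :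
    ∃ l : List V, IsCycleList G l ∧ (∀ v ∈ l, v ∈ A ∨ v ∈ B) ∧ 2 * m ≤ l.length + 8 * K := by
  have hX : (A ∪ B).card = 2 * m := by rw [Finset.card_union_of_disjoint hAB]; omega
  obtain ⟨s, T, hs, hc, hsX, hTX, hsT, hno, hcard⟩ := dfs_aux
    (fun x y => G.Adj x y ∧ (x ∈ A ∧ y ∈ B ∨ x ∈ B ∧ y ∈ A))
    (fun x y h => ⟨h.1.symm, by tauto⟩) (A ∪ B) (2 * m) hX.ge
  have hBA : ∀ v ∈ B, v ∉ A := fun v hv hv' => Finset.disjoint_left.1 hAB hv' hv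
  have hcG : s.IsChain G.Adj := hc.imp (fun _ _ h => h.1)
  have hcA : s.IsChain (fun x y => (x ∈ A ↔ y ∉ A)) := hc.imp (fun x y h => by
    rcases h.2 with h | h
    · simp [h.1, hBA _ h.2]
    · simp [h.2, hBA _ h.1])
  -- generic facts about subsegments
  have hcnt : ∀ s' : List V, s'.Nodup → (∀ v ∈ s', v ∈ A ∪ B) →
      (s'.toFinset ∩ A).card = (s'.filter (· ∈ A)).length ∧
      (s'.toFinset ∩ A).card + (s'.toFinset ∩ B).card = s'.length := by
    intro s' hn hX'
    constructor
    · rw [← List.toFinset_card_of_nodup (hn.filter _)]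
      congr 1
      ext v; simp
    · rw [← Finset.card_union_of_disjoint, ← Finset.inter_union_distrib_left,
        Finset.inter_eq_left.2, List.toFinset_card_of_nodup hn]
      · intro v hv; exact hX' v (by simpa using hv)
      · exact hAB.mono Finset.inter_subset_right Finset.inter_subset_right
  have hcounts := hcnt s hs hsX
  have halt := alt_count A s.length s rfl hcA
  -- complement set
  set U : Finset V := (A ∪ B) \ (T ∪ s.toFinset) with hU
  have hpart : ∀ D ⊆ A ∪ B, (T ∩ D).card + (s.toFinset ∩ D).card + (U ∩ D).card = D.card := by
    intro D hD
    rw [← Finset.card_union_of_disjoint, ← Finset.card_union_of_disjoint]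
    · congr 1
      ext v
      have := @hD v
      simp only [hU, Finset.mem_union, Finset.mem_inter, Finset.mem_sdiff] at this ⊢
      tauto
    · rw [Finset.disjoint_left]
      intro v
      simp only [hU, Finset.mem_union, Finset.mem_inter, Finset.mem_sdiff]
      tauto
    · rw [Finset.disjoint_left]
      intro v
      simp only [Finset.mem_inter, List.mem_toFinset]
      intro h1 h2
      exact hsT v h2.1 h1.1
  have hpA := hpart A Finset.subset_union_left
  have hpB := hpart B Finset.subset_union_right
  have hTc : (T ∩ A).card + (T ∩ B).card = T.card := by
    rw [← Finset.card_union_of_disjoint, ← Finset.inter_union_distrib_left,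
        Finset.inter_eq_left.2 hTX]
    exact hAB.mono Finset.inter_subset_right Finset.inter_subset_right
  have hnoE : ∀ t ∈ T, ∀ u ∈ U, ¬ (G.Adj t u ∧ (t ∈ A ∧ u ∈ B ∨ t ∈ B ∧ u ∈ A)) := by
    intro t ht u hu
    simp only [hU, Finset.mem_sdiff, Finset.mem_union, List.mem_toFinset, not_or] at hu
    exact hno t ht u (by simpa using hu.1) hu.2.1 hu.2.2
  have ha : (T ∩ A).card < K ∨ (U ∩ B).card < K := by
    by_contra hcon
    push Not at hcon
    obtain ⟨a, ha, b, hb, hab⟩ := hE _ Finset.inter_subset_right _ Finset.inter_subset_right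
      hcon.1 hcon.2
    simp only [Finset.mem_inter] at ha hb
    exact hnoE a ha.1 b hb.1 ⟨hab, Or.inl ⟨ha.2, hb.2⟩⟩
  have hb : (U ∩ A).card < K ∨ (T ∩ B).card < K := by
    by_contra hcon
    push Not at hcon
    obtain ⟨a, ha, b, hb, hab⟩ := hE _ Finset.inter_subset_right _ Finset.inter_subset_right
      hcon.1 hcon.2
    simp only [Finset.mem_inter] at ha hb
    exact hnoE b hb.1 a ha.1 ⟨hab.symm, Or.inr ⟨hb.2, ha.2⟩⟩
  have hlen : 2 * m ≤ s.length + 4 * K := by omega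
  -- split the path
  obtain ⟨s1, s2, s3, rfl, h1, h3⟩ : ∃ s1 s2 s3 : List V, s = s1 ++ (s2 ++ s3) ∧
      s1.length = 2 * K ∧ s3.length = 2 * K := by
    refine ⟨s.take (2 * K), (s.drop (2 * K)).take (s.length - 4 * K),
      (s.drop (2 * K)).drop (s.length - 4 * K), ?_, ?_, ?_⟩
    · simp
    · simp; omega
    · simp; omega
  have hAs1 : K ≤ (s1.toFinset ∩ A).card := by
    have h := hcnt s1 hs.of_append_left (fun v hv => hsX v (by simp [hv]))
    have h' := alt_count A s1.length s1 rfl hcA.left_of_append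
    omega
  have hBs3 : K ≤ (s3.toFinset ∩ B).card := by
    have h := hcnt s3 hs.of_append_right.of_append_right (fun v hv => hsX v (by simp [hv]))
    have h' := alt_count A s3.length s3 rfl hcA.right_of_append.right_of_append
    omega
  obtain ⟨a, ha', b, hb', hab⟩ := hE _ Finset.inter_subset_right _ Finset.inter_subset_right
    hAs1 hBs3
  simp only [Finset.mem_inter, List.mem_toFinset] at ha' hb'
  obtain ⟨p, q, rfl⟩ := List.append_of_mem ha'.1
  obtain ⟨q', r, rfl⟩ := List.append_of_mem hb'.1
  have hre : p ++ a :: q ++ (s2 ++ (q' ++ b :: r)) = p ++ ((a :: (q ++ s2 ++ q' ++ [b])) ++ r) := by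
    simp
  rw [hre] at hs hcG hsX hlen
  refine ⟨a :: (q ++ s2 ++ q' ++ [b]), ⟨?_, hs.of_append_right.of_append_left,
    hcG.right_of_append.left_of_append, ?_⟩, ?_, ?_⟩
  · simp at hlen h1 h3 ⊢; omega
  · intro h
    simpa using hab.symm
  · intro v hv
    have := hsX v (List.mem_append_right _ (List.mem_append_left _ hv))
    simpa using this
  · simp at hlen h1 h3 ⊢; omega

theorem hall_deficient {ι : Type} [Fintype ι] [DecidableEq ι] (R : ι → ι → Prop) [DecidableRel R]
    (r : ℕ) (h : ∀ S : Finset ι, S.card ≤ (univ.filter (fun w => ∃ u ∈ S, R u w)).card + r) :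
    ∃ (D : Finset ι) (σ : ι → ι), (∀ x ∈ D, ∀ y ∈ D, σ x = σ y → x = y) ∧ (∀ x ∈ D, R x (σ x)) ∧
      Fintype.card ι ≤ D.card + r := by
  obtain ⟨f, hf, hft⟩ := (Finset.all_card_le_biUnion_card_iff_exists_injective
    (fun u : ι => (univ.filter (R u)).disjSum (univ : Finset (Fin r)))).1 (by
      intro S
      rcases S.eq_empty_or_nonempty with rfl | ⟨x, hx⟩
      · simp
      refine (h S).trans ?_
      have : (univ.filter (fun w => ∃ u ∈ S, R u w)).disjSum (univ : Finset (Fin r)) ⊆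
          S.biUnion (fun u : ι => (univ.filter (R u)).disjSum (univ : Finset (Fin r))) := by
        intro y hy
        rcases y with y | y
        · simpa using hy
        · simp; exact ⟨x, hx⟩
      have h2 := Finset.card_le_card this
      simpa using h2)
  classical
  refine ⟨univ.filter (fun x => (f x).isLeft), fun x => Sum.elim id (fun _ => x) (f x), ?_, ?_, ?_⟩
  · intro x hx y hy hxy
    simp only [mem_filter, mem_univ, true_and, Sum.isLeft_iff] at hx hy
    obtain ⟨a, ha⟩ := hx
    obtain ⟨b, hb⟩ := hy
    apply hf
    simp [ha, hb] at hxy ⊢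
    exact hxy
  · intro x hx
    simp only [mem_filter, mem_univ, true_and, Sum.isLeft_iff] at hx
    obtain ⟨a, ha⟩ := hx
    have := hft x
    rw [ha] at this
    simpa [ha] using this
  · have h1 := Finset.card_filter_add_card_filter_not (s := (univ : Finset ι))
      (fun x => (f x).isLeft = true)
    have h2 : (univ.filter (fun x => ¬ (f x).isLeft = true)).card ≤ r := by
      have : (univ.filter (fun x => ¬ (f x).isLeft = true)).image f ⊆
          (univ : Finset (Fin r)).map ⟨Sum.inr, Sum.inr_injective⟩ := by
        intro y hy
        simp only [mem_image, mem_filter, mem_univ, true_and] at hy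
        obtain ⟨x, hx, rfl⟩ := hy
        rcases hfx : f x with a | a
        · simp [hfx] at hx
        · simp
      have h3 := Finset.card_le_card this
      rw [Finset.card_image_of_injective _ hf] at h3
      simpa using h3
    rw [Finset.card_univ] at h1
    omega

theorem assemble_s18 {V ι : Type} [Fintype V] [DecidableEq V] [Fintype ι] [DecidableEq ι]
    (G : SimpleGraph V) (part : ι → Finset V)
    (hdis : ∀ i j, i ≠ j → Disjoint (part i) (part j)) (h K : ℕ)
    (hcard : ∀ i, 2 * h ≤ (part i).card) (hK : 1 ≤ K) (hKh : 4 * K < h)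
    (D : Finset ι) (σ : ι → ι) (hσ : ∀ x ∈ D, ∀ y ∈ D, σ x = σ y → x = y)
    (hne : ∀ x ∈ D, x ≠ σ x)
    (hE : ∀ x ∈ D, ∀ A' ⊆ part x, ∀ B' ⊆ part (σ x), K ≤ A'.card → K ≤ B'.card →
      ∃ a ∈ A', ∃ b ∈ B', G.Adj a b) :
    ∃ 𝒞 : Finset (List V),
      (∀ l ∈ 𝒞, IsCycleList G l) ∧
      (∀ l ∈ 𝒞, ∀ l' ∈ 𝒞, l ≠ l' → ∀ v, v ∈ l → v ∉ l') ∧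
      𝒞.card ≤ D.card ∧
      (univ.filter (fun v : V => ∀ l ∈ 𝒞, v ∉ l)).card + D.card * (2 * h) ≤
        Fintype.card V + D.card * (8 * K) := by
  have hhalf : ∀ i, ∃ A B : Finset V, A ⊆ part i ∧ B ⊆ part i ∧ Disjoint A B ∧
      A.card = h ∧ B.card = h := by
    intro i
    obtain ⟨A, hA, hAc⟩ := Finset.exists_subset_card_eq (s := part i) (n := h)
      (by have := hcard i; omega)
    obtain ⟨B, hB, hBc⟩ := Finset.exists_subset_card_eq (s := part i \ A) (n := h)
      (by rw [Finset.card_sdiff_of_subset hA]; have := hcard i; omega)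
    refine ⟨A, B, hA, hB.trans Finset.sdiff_subset, ?_, hAc, hBc⟩
    exact Finset.disjoint_of_subset_right hB Finset.disjoint_sdiff
  choose A B hA hB hAB hAc hBc using hhalf
  have hcyc : ∀ x, ∃ l : List V, x ∈ D → IsCycleList G l ∧ (∀ v ∈ l, v ∈ A x ∨ v ∈ B (σ x)) ∧
      2 * h ≤ l.length + 8 * K := by
    intro x
    by_cases hx : x ∈ D
    · obtain ⟨l, hl⟩ := pair_cycle G (A x) (B (σ x)) h K
        ((hdis x (σ x) (hne x hx)).mono (hA x) (hB _)) (hAc x) (hBc _) hK hKh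
        (fun A' hA' B' hB' => hE x hx A' (hA'.trans (hA x)) B' (hB'.trans (hB _)))
      exact ⟨l, fun _ => hl⟩
    · exact ⟨[], fun h => absurd h hx⟩
  choose l hl using hcyc
  have hdisj : ∀ x ∈ D, ∀ y ∈ D, x ≠ y → ∀ v, v ∈ l x → v ∉ l y := by
    intro x hx y hy hxy v hv hv'
    have key : ∀ i j, v ∈ part i → v ∈ part j → i = j := by
      intro i j hi hj
      by_contra hij
      exact Finset.disjoint_left.1 (hdis i j hij) hi hj
    have key2 : ∀ i j, v ∈ A i → v ∉ B j := by
      intro i j hi hj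
      obtain rfl := key i j (hA i hi) (hB j hj)
      exact Finset.disjoint_left.1 (hAB i) hi hj
    rcases (hl x hx).2.1 v hv with h1 | h1 <;> rcases (hl y hy).2.1 v hv' with h2 | h2
    · exact hxy (key _ _ (hA _ h1) (hA _ h2))
    · exact key2 _ _ h1 h2
    · exact key2 _ _ h2 h1
    · exact hxy (hσ x hx y hy (key _ _ (hB _ h1) (hB _ h2)))
  refine ⟨D.image l, ?_, ?_, Finset.card_image_le, ?_⟩
  · intro c hc
    obtain ⟨x, hx, rfl⟩ := Finset.mem_image.1 hc
    exact (hl x hx).1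
  · intro c hc c' hc' hcc
    obtain ⟨x, hx, rfl⟩ := Finset.mem_image.1 hc
    obtain ⟨y, hy, rfl⟩ := Finset.mem_image.1 hc'
    exact hdisj x hx y hy (fun h => hcc (by rw [h]))
  · have hcov : (D.biUnion (fun x => (l x).toFinset)).card = ∑ x ∈ D, (l x).length := by
      rw [Finset.card_biUnion]
      · exact Finset.sum_congr rfl (fun x hx => List.toFinset_card_of_nodup (hl x hx).1.2.1)
      · intro x hx y hy hxy
        refine Finset.disjoint_left.2 ?_
        intro v hv hv'
        exact hdisj x hx y hy hxy v (by simpa using hv) (by simpa using hv')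
    have hun : (univ.filter (fun v : V => ∀ c ∈ D.image l, v ∉ c)) =
        (D.biUnion (fun x => (l x).toFinset))ᶜ := by
      ext v; simp
    have hsum : D.card * (2 * h) ≤ ∑ x ∈ D, (l x).length + D.card * (8 * K) := by
      have : ∑ x ∈ D, (2 * h) ≤ ∑ x ∈ D, ((l x).length + 8 * K) :=
        Finset.sum_le_sum (fun x hx => (hl x hx).2.2)
      simpa [Finset.sum_add_distrib] using this
    rw [hun]
    have := Finset.card_compl_add_card (D.biUnion (fun x => (l x).toFinset))
    omega

theorem sum_interedges {V : Type} [Fintype V] [DecidableEq V] (G : SimpleGraph V)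
    [DecidableRel G.Adj] (P : Finpartition (univ : Finset V)) (u : Finset V) :
    ∑ w ∈ P.parts, (G.interedges u w).card = ∑ v ∈ u, G.degree v := by
  have h1 := Rel.card_interedges_finpartition_right (r := G.Adj) u P
  change ∑ w ∈ P.parts, (Rel.interedges G.Adj u w).card = _
  rw [← h1, Rel.interedges, Finset.card_filter, Finset.sum_product]
  refine Finset.sum_congr rfl (fun v _ => ?_)
  rw [← Finset.card_filter, ← SimpleGraph.card_neighborFinset_eq_degree,
    SimpleGraph.neighborFinset_eq_filter]

/-- Regular, dense pairs of distinct parts. -/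
def GoodPair {V : Type} [Fintype V] [DecidableEq V] (G : SimpleGraph V)
    [DecidableRel G.Adj] (η : ℝ) (u w : Finset V) : Prop :=
  u ≠ w ∧ G.IsUniform η u w ∧ 2 * η ≤ ((G.edgeDensity u w : ℚ) : ℝ)

open Classical in
theorem count_edges {V : Type} [Fintype V] [DecidableEq V] (G : SimpleGraph V)
    [DecidableRel G.Adj] (P : Finpartition (univ : Finset V)) (η a b : ℝ) (m : ℕ) (hη : 0 < η)
    (ha : 0 ≤ a) (hb : 0 ≤ b)
    (hm1 : ∀ u ∈ P.parts, m ≤ u.card) (hm2 : ∀ u ∈ P.parts, u.card ≤ m + 1)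
    (hdeg : ∀ v, a ≤ (G.degree v : ℝ) ∧ (G.degree v : ℝ) ≤ b)
    (hU : P.IsUniform G η) (S : Finset (Finset V)) (hS : S ⊆ P.parts) :
    (S.card : ℝ) * m * a ≤
      ((P.parts.filter (fun w => ∃ u ∈ S, GoodPair G η u w)).card : ℝ) * (m + 1) * b +
      ((m : ℝ) + 1) ^ 2 * (P.parts.card + 3 * η * (P.parts.card : ℝ) ^ 2) := by
  set N := P.parts.filter (fun w => ∃ u ∈ S, GoodPair G η u w) with hN
  have hNP : N ⊆ P.parts := Finset.filter_subset _ _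
  set e : Finset V → Finset V → ℝ := fun u w => ((G.interedges u w).card : ℝ) with he
  have hsum : ∀ u, ∑ w ∈ P.parts, e u w = ∑ v ∈ u, (G.degree v : ℝ) := by
    intro u
    have := sum_interedges G P u
    simp only [he]
    exact_mod_cast this
  have he0 : ∀ u w, 0 ≤ e u w := fun u w => by simp [he]
  have hsymm : ∀ u w, e u w = e w u := by
    intro u w
    simp only [he, SimpleGraph.interedges]
    haveI : Std.Symm G.Adj := ⟨fun _ _ h => h.symm⟩
    rw [Rel.card_interedges_comm]
  have hlow : (S.card : ℝ) * m * a ≤ ∑ u ∈ S, ∑ w ∈ P.parts, e u w := by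
    have : ∑ u ∈ S, ((m : ℝ) * a) ≤ ∑ u ∈ S, ∑ w ∈ P.parts, e u w := by
      refine Finset.sum_le_sum (fun u hu => ?_)
      rw [hsum]
      have h1 : ∑ v ∈ u, a ≤ ∑ v ∈ u, (G.degree v : ℝ) :=
        Finset.sum_le_sum (fun v _ => (hdeg v).1)
      rw [Finset.sum_const, nsmul_eq_mul] at h1
      have h2 : (m : ℝ) ≤ u.card := by exact_mod_cast hm1 u (hS hu)
      nlinarith
    rw [Finset.sum_const, nsmul_eq_mul] at this
    linarith
  have hhigh : ∑ u ∈ S, ∑ w ∈ N, e u w ≤ (N.card : ℝ) * (m + 1) * b := by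
    rw [Finset.sum_comm]
    have : ∑ w ∈ N, ∑ u ∈ S, e u w ≤ ∑ w ∈ N, (((m : ℝ) + 1) * b) := by
      refine Finset.sum_le_sum (fun w hw => ?_)
      have h0 : ∑ u ∈ S, e u w ≤ ∑ u ∈ P.parts, e w u := by
        rw [Finset.sum_congr rfl (fun u _ => hsymm u w)]
        exact Finset.sum_le_sum_of_subset_of_nonneg hS (fun u _ _ => he0 w u)
      rw [hsum] at h0
      have h1 : ∑ v ∈ w, (G.degree v : ℝ) ≤ ∑ v ∈ w, b :=
        Finset.sum_le_sum (fun v _ => (hdeg v).2)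
      rw [Finset.sum_const, nsmul_eq_mul] at h1
      have h2 : (w.card : ℝ) ≤ m + 1 := by exact_mod_cast hm2 w (hNP hw)
      nlinarith
    rw [Finset.sum_const, nsmul_eq_mul] at this
    linarith
  have hsq : ∀ u ∈ P.parts, ∀ w ∈ P.parts, (u.card : ℝ) * w.card ≤ ((m : ℝ) + 1) ^ 2 := by
    intro u hu w hw
    have h1 : (u.card : ℝ) ≤ m + 1 := by exact_mod_cast hm2 u hu
    have h2 : (w.card : ℝ) ≤ m + 1 := by exact_mod_cast hm2 w hw
    rw [sq]
    exact mul_le_mul h1 h2 (by positivity) (by positivity)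
  set M2 : ℝ := ((m : ℝ) + 1) ^ 2 with hM2
  have hM0 : 0 ≤ M2 := by positivity
  -- pointwise bound on bad pairs
  have hbad : ∀ u ∈ P.parts, ∀ w ∈ P.parts, (if GoodPair G η u w then 0 else e u w) ≤
      (if u = w then M2 else 0) + (if (u, w) ∈ P.nonUniforms G η then M2 else 0) + 2 * η * M2 := by
    intro u hu w hw
    have hle : e u w ≤ M2 := by
      refine le_trans ?_ (hsq u hu w hw)
      simp only [he]
      exact_mod_cast G.card_interedges_le_mul u w
    have h2 : 0 ≤ 2 * η * M2 := by positivity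
    have hp1 : 0 ≤ (if u = w then M2 else 0) := by split_ifs <;> linarith
    have hp2 : 0 ≤ (if (u, w) ∈ P.nonUniforms G η then M2 else 0) := by split_ifs <;> linarith
    by_cases hg : GoodPair G η u w
    · rw [if_pos hg]; linarith
    · rw [if_neg hg]
      by_cases huw : u = w
      · rw [if_pos huw]; linarith
      · by_cases hun : G.IsUniform η u w
        · have hd : ((G.edgeDensity u w : ℚ) : ℝ) < 2 * η := by
            by_contra hcon
            exact hg ⟨huw, hun, not_lt.1 hcon⟩
          have hupos : (0 : ℝ) < u.card := by
            exact_mod_cast (P.nonempty_of_mem_parts hu).card_pos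
          have hwpos : (0 : ℝ) < w.card := by
            exact_mod_cast (P.nonempty_of_mem_parts hw).card_pos
          rw [SimpleGraph.edgeDensity_def] at hd
          push_cast at hd
          rw [div_lt_iff₀ (by positivity)] at hd
          have : e u w ≤ 2 * η * M2 := by
            refine hd.le.trans ?_
            exact mul_le_mul_of_nonneg_left (hsq u hu w hw) (by positivity)
          linarith
        · have : (u, w) ∈ P.nonUniforms G η := by
            rw [Finpartition.mk_mem_nonUniforms]; exact ⟨hu, hw, huw, hun⟩
          rw [if_pos this]; linarith
  have hsplit : ∑ u ∈ S, ∑ w ∈ P.parts, e u w ≤ ∑ u ∈ S, ∑ w ∈ N, e u w +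
      ∑ u ∈ P.parts, ∑ w ∈ P.parts, (if GoodPair G η u w then 0 else e u w) := by
    have hpos : ∀ u w, 0 ≤ (if GoodPair G η u w then 0 else e u w) := by
      intro u w; split_ifs
      · exact le_rfl
      · exact he0 u w
    have h1 : ∑ u ∈ S, ∑ w ∈ P.parts, e u w ≤ ∑ u ∈ S, (∑ w ∈ N, e u w +
      ∑ w ∈ P.parts, (if GoodPair G η u w then 0 else e u w)) := by
      refine Finset.sum_le_sum (fun u hu => ?_)
      rw [← Finset.sum_sdiff hNP, add_comm]
      refine add_le_add le_rfl ?_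
      have h2 : ∑ w ∈ P.parts \ N, e u w =
          ∑ w ∈ P.parts \ N, (if GoodPair G η u w then 0 else e u w) := by
        refine Finset.sum_congr rfl (fun w hw => ?_)
        rw [if_neg]
        intro hg
        rw [Finset.mem_sdiff] at hw
        exact hw.2 (Finset.mem_filter.2 ⟨hw.1, u, hu, hg⟩)
      rw [h2]
      have h3 : ∀ T : Finset (Finset V),
          0 ≤ ∑ w ∈ T, (if GoodPair G η u w then 0 else e u w) :=
        fun T => Finset.sum_nonneg (fun w _ => hpos u w)
      exact Finset.sum_le_sum_of_subset_of_nonneg Finset.sdiff_subset (fun w _ _ => hpos u w)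
    rw [Finset.sum_add_distrib] at h1
    refine h1.trans (add_le_add le_rfl ?_)
    exact Finset.sum_le_sum_of_subset_of_nonneg hS
      (fun u _ _ => Finset.sum_nonneg (fun w _ => hpos u w))
  have htot : ∑ u ∈ P.parts, ∑ w ∈ P.parts, (if GoodPair G η u w then 0 else e u w) ≤
      M2 * (P.parts.card + 3 * η * (P.parts.card : ℝ) ^ 2) := by
    refine (Finset.sum_le_sum (fun u hu => Finset.sum_le_sum (fun w hw => hbad u hu w hw))).trans ?_
    simp only [Finset.sum_add_distrib, Finset.sum_const, nsmul_eq_mul]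
    have h1 : ∑ u ∈ P.parts, ∑ w ∈ P.parts, (if u = w then M2 else 0) = P.parts.card * M2 := by
      rw [Finset.sum_congr rfl (g := fun _ => M2)]
      · simp
      · intro u hu
        simp [hu]
    have h2 : ∑ u ∈ P.parts, ∑ w ∈ P.parts, (if (u, w) ∈ P.nonUniforms G η then M2 else 0) ≤
        (P.nonUniforms G η).card * M2 := by
      rw [← Finset.sum_product' (f := fun u w => if (u, w) ∈ P.nonUniforms G η then M2 else 0),
        ← Finset.sum_filter, Finset.sum_const, nsmul_eq_mul]
      refine mul_le_mul_of_nonneg_right ?_ hM0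
      exact_mod_cast Finset.card_le_card (fun x hx => (Finset.mem_filter.1 hx).2)
    have h3 : ((P.nonUniforms G η).card : ℝ) ≤ η * (P.parts.card : ℝ) ^ 2 := by
      have h4 : ((P.nonUniforms G η).card : ℝ) ≤
        ((P.parts.card * (P.parts.card - 1) : ℕ) : ℝ) * η := hU
      have h5 : ((P.parts.card * (P.parts.card - 1) : ℕ) : ℝ) ≤ (P.parts.card : ℝ) ^ 2 := by
        rw [sq]
        exact_mod_cast Nat.mul_le_mul_left _ (Nat.sub_le _ _)
      nlinarith
    rw [h1]
    nlinarith
  linarith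

set_option maxHeartbeats 4000000 in
open Classical in
theorem main_aux (c α : ℝ) (hc : 0 < c) (hα : 0 < α) (hα1 : α ≤ 1) :
    ∃ (ε : ℝ) (C : ℕ), 0 < ε ∧ 0 < C ∧
      ∃ n₀ : ℕ, ∀ n : ℕ, n₀ ≤ n →
        ∀ (V : Type) [Fintype V] [DecidableEq V] (G : SimpleGraph V) [DecidableRel G.Adj],
          Fintype.card V = n →
          (∀ v : V, (1 - ε) * c * n ≤ (G.degree v : ℝ) ∧ (G.degree v : ℝ) ≤ (1 + ε) * c * n) →
          ∃ 𝒞 : Finset (List V),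
            (∀ l ∈ 𝒞, IsCycleList G l) ∧
            (∀ l ∈ 𝒞, ∀ l' ∈ 𝒞, l ≠ l' → ∀ v, v ∈ l → v ∉ l') ∧
            𝒞.card ≤ C ∧
            ((Finset.univ.filter (fun v : V => ∀ l ∈ 𝒞, v ∉ l)).card : ℝ) ≤ α * n := by
  obtain ⟨η, hη, hη1, hη2⟩ : ∃ η : ℝ, 0 < η ∧ η ≤ α / 100 ∧ 12 * η ≤ α * c / 100 :=
    ⟨min (α / 100) (α * c / 1200), by positivity, min_le_left _ _, by
      have := min_le_right (α / 100) (α * c / 1200); linarith⟩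
  obtain ⟨l, hl⟩ := exists_nat_gt (400 / (α * c))
  have hlpos : (0 : ℝ) < l := lt_trans (by positivity) hl
  have hl' : 4 ≤ α * c / 100 * l := by
    rw [div_lt_iff₀ (by positivity)] at hl; linarith
  have hl1 : 1 ≤ l := by exact_mod_cast hlpos
  set M := SzemerediRegularity.bound η l with hM
  obtain ⟨n₁, hn₁⟩ := exists_nat_gt (100 * M / α)
  refine ⟨α / 100, M + 1, by positivity, by omega, max l n₁ + 1, ?_⟩
  intro n hn V _ _ G _ hcardV hdeg
  have hnl : l ≤ n := by have := le_max_left l n₁; omega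
  have hnn : n₁ ≤ n := by have := le_max_right l n₁; omega
  have hnpos : (0 : ℝ) < n := by
    have : 0 < n := by omega
    exact_mod_cast this
  obtain ⟨P, hPe, hPl, hPM, hPU⟩ := szemeredi_regularity G hη (l := l) (by omega)
  set k := P.parts.card with hk
  have hk1 : 1 ≤ k := hl1.trans hPl
  have hkpos : (0 : ℝ) < k := by exact_mod_cast hk1
  have hMn : 100 * (M : ℝ) ≤ α * n := by
    have h1 : (n₁ : ℝ) ≤ n := by exact_mod_cast hnn
    rw [div_lt_iff₀ hα] at hn₁
    nlinarith
  have hkM : (k : ℝ) ≤ M := by exact_mod_cast hPM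
  have hkn : 100 * (k : ℝ) ≤ α * n := by linarith
  set m := n / k with hm
  have hmk : k * m ≤ n := Nat.mul_div_le n k
  have hmk' : n < k * (m + 1) := by
    have := Nat.lt_mul_div_succ n hk1
    simpa [hm] using this
  have hm100 : 100 ≤ m := by
    rw [hm, Nat.le_div_iff_mul_le hk1]
    have : 100 * (k : ℝ) ≤ n := by nlinarith
    exact_mod_cast this
  have hmkR : (k : ℝ) * m ≤ n := by exact_mod_cast hmk
  have hmkR' : (n : ℝ) ≤ k * (m + 1) := by exact_mod_cast hmk'.le
  have hm100R : (100 : ℝ) ≤ m := by exact_mod_cast hm100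
  have hm1 : ∀ u ∈ P.parts, m ≤ u.card := by
    intro u hu
    have := hPe.average_le_card_part hu
    rwa [Finset.card_univ, hcardV] at this
  have hm2 : ∀ u ∈ P.parts, u.card ≤ m + 1 := by
    intro u hu
    have := hPe.card_part_le_average_add_one hu
    rwa [Finset.card_univ, hcardV] at this
  -- Hall condition
  have hHall : ∀ S : Finset (Finset V), S ⊆ P.parts → (S.card : ℝ) ≤
      ((P.parts.filter (fun w => ∃ u ∈ S, GoodPair G η u w)).card : ℝ) + α / 4 * k := by
    intro S hS
    have h1 := count_edges G P η ((1 - α / 100) * c * n) ((1 + α / 100) * c * n) m hη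
      (by have : 0 ≤ 1 - α / 100 := by linarith
          positivity) (by positivity) hm1 hm2 hdeg hPU S hS
    have hSk : (S.card : ℝ) ≤ k := by exact_mod_cast Finset.card_le_card hS
    have hNk : ((P.parts.filter (fun w => ∃ u ∈ S, GoodPair G η u w)).card : ℝ) ≤ k := by
      exact_mod_cast Finset.card_le_card (Finset.filter_subset _ _)
    rw [← hk] at h1
    generalize ((P.parts.filter (fun w => ∃ u ∈ S, GoodPair G η u w)).card : ℝ) = N at *
    have hS0 : (0 : ℝ) ≤ S.card := by positivity
    generalize (S.card : ℝ) = s at *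
    have hkl : (l : ℝ) ≤ k := by exact_mod_cast hPl
    have h2n : (k : ℝ) * (m + 1) ≤ 2 * n := by nlinarith
    have hkm0 : (0 : ℝ) ≤ k * (m + 1) := by positivity
    have h4n : ((k : ℝ) * (m + 1)) ^ 2 ≤ 4 * n ^ 2 := by nlinarith
    have hk4 : 4 ≤ α * c / 100 * k := by
      have : 0 < α * c / 100 := by positivity
      nlinarith
    have herr : ((m : ℝ) + 1) ^ 2 * (k + 3 * η * (k : ℝ) ^ 2) ≤ α * c / 50 * n ^ 2 := by
      have e1 : ((m : ℝ) + 1) ^ 2 * k * 4 ≤ α * c / 100 * ((k : ℝ) * (m + 1)) ^ 2 := by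
        have : ((m : ℝ) + 1) ^ 2 * k * 4 ≤ ((m : ℝ) + 1) ^ 2 * k * (α * c / 100 * k) :=
          mul_le_mul_of_nonneg_left hk4 (by positivity)
        linarith
      have e2 : α * c / 100 * ((k : ℝ) * (m + 1)) ^ 2 ≤ α * c / 100 * (4 * n ^ 2) :=
        mul_le_mul_of_nonneg_left h4n (by positivity)
      have e3 : 3 * η * ((k : ℝ) * (m + 1)) ^ 2 ≤ 3 * η * (4 * n ^ 2) :=
        mul_le_mul_of_nonneg_left h4n (by positivity)
      have e4 : 12 * η * n ^ 2 ≤ α * c / 100 * n ^ 2 :=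
        mul_le_mul_of_nonneg_right hη2 (by positivity)
      nlinarith
    have h5 : c * n * (s * m * (1 - α / 100)) ≤
        c * n * (N * (m + 1) * (1 + α / 100) + α / 50 * n) := by linarith
    have h6 := le_of_mul_le_mul_left h5 (by positivity)
    by_contra hcon
    push Not at hcon
    have h7 : (N + α / 4 * k) * m ≤ s * m :=
      mul_le_mul_of_nonneg_right hcon.le (by positivity)
    have h8 : s * m ≤ n := by
      have : s * m ≤ k * m := mul_le_mul_of_nonneg_right hSk (by positivity)
      linarith
    have h9 : N * (m + 1) ≤ 2 * n := by
      have : N * (m + 1) ≤ k * (m + 1) := mul_le_mul_of_nonneg_right hNk (by positivity)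
      linarith
    have h10 : α * n ≤ α * (2 * (k * m)) :=
      mul_le_mul_of_nonneg_left (by nlinarith) hα.le
    have h11 := mul_le_mul_of_nonneg_left h8 hα.le
    have h12 := mul_le_mul_of_nonneg_left h9 hα.le
    have h13 : 0 < α * n := by positivity
    nlinarith
  -- apply Hall
  set r := ⌊α / 4 * k⌋₊ with hr
  have hrle : (r : ℝ) ≤ α / 4 * k := Nat.floor_le (by positivity)
  obtain ⟨D, σ, hσ, hgood, hDr⟩ := hall_deficient
    (ι := {x // x ∈ P.parts}) (fun u w => GoodPair G η u.1 w.1) r (by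
      intro S
      have h1 := hHall (S.map (Function.Embedding.subtype _)) (by
        intro x hx
        simp only [Finset.mem_map, Function.Embedding.subtype_apply] at hx
        obtain ⟨y, _, rfl⟩ := hx
        exact y.2)
      have h2 : P.parts.filter (fun w => ∃ u ∈ S.map (Function.Embedding.subtype _),
          GoodPair G η u w) = (univ.filter (fun w : {x // x ∈ P.parts} =>
            ∃ u ∈ S, GoodPair G η u.1 w.1)).map (Function.Embedding.subtype _) := by
        ext w
        simp only [Finset.mem_filter, Finset.mem_map, Function.Embedding.subtype_apply,
          Finset.mem_univ, true_and]
        constructor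
        · rintro ⟨hw, u, ⟨u', hu', rfl⟩, hg⟩
          exact ⟨⟨w, hw⟩, ⟨u', hu', hg⟩, rfl⟩
        · rintro ⟨w', ⟨u, hu, hg⟩, rfl⟩
          exact ⟨w'.2, u.1, ⟨u, hu, rfl⟩, hg⟩
      rw [h2, Finset.card_map, Finset.card_map] at h1
      have h3 : S.card - (univ.filter (fun w : {x // x ∈ P.parts} =>
            ∃ u ∈ S, GoodPair G η u.1 w.1)).card ≤ r := by
        rw [hr]
        apply Nat.le_floor
        rcases le_total (univ.filter (fun w : {x // x ∈ P.parts} =>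
            ∃ u ∈ S, GoodPair G η u.1 w.1)).card S.card with h | h
        · rw [Nat.cast_sub h]; linarith
        · rw [Nat.sub_eq_zero_of_le h]; simp; positivity
      omega)
  have hDk : D.card ≤ k := by
    have := Finset.card_le_univ D
    simpa [hk] using this
  have hDr' : k ≤ D.card + r := by simpa [hk] using hDr
  set K := ⌈η * (m + 1)⌉₊ with hKdef
  have hK1 : 1 ≤ K := Nat.ceil_pos.2 (by positivity)
  have hKge : η * (m + 1) ≤ K := Nat.le_ceil _
  have hKle : (K : ℝ) ≤ η * (m + 1) + 1 := (Nat.ceil_lt_add_one (by positivity)).le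
  have hη100 : η ≤ 1 / 100 := by linarith
  have hKh : 4 * K < m / 2 := by
    have : (K : ℝ) * 100 ≤ m + 101 := by nlinarith
    have : K * 100 ≤ m + 101 := by exact_mod_cast this
    omega
  obtain ⟨𝒞, h1, h2, h3, h4⟩ := assemble_s18 G (fun i : {x // x ∈ P.parts} => i.1)
    (fun i j hij => P.disjoint i.2 j.2 (fun h => hij (Subtype.ext h))) (m / 2) K
    (fun i => by have := hm1 i.1 i.2; omega) hK1 hKh D σ hσ
    (fun x hx h => (hgood x hx).1 (congrArg Subtype.val h)) (by
      intro x hx A' hA' B' hB' hKA hKB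
      obtain ⟨-, hun, hd⟩ := hgood x hx
      have hsz : ∀ i : {x // x ∈ P.parts}, (i.1.card : ℝ) * η ≤ K := by
        intro i
        have h : (i.1.card : ℝ) ≤ m + 1 := by exact_mod_cast hm2 i.1 i.2
        nlinarith
      have hden := hun hA' hB' ((hsz x).trans (by exact_mod_cast hKA))
        ((hsz (σ x)).trans (by exact_mod_cast hKB))
      have hpos : 0 < ((G.edgeDensity A' B' : ℚ) : ℝ) := by
        have := (abs_lt.1 hden).1
        linarith
      have hne : (G.interedges A' B').Nonempty := by
        rw [Finset.nonempty_iff_ne_empty]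
        intro h
        rw [SimpleGraph.edgeDensity_def, h] at hpos
        simp at hpos
      obtain ⟨⟨a, b⟩, hab⟩ := hne
      rw [SimpleGraph.mk_mem_interedges_iff] at hab
      exact ⟨a, hab.1, b, hab.2.1, hab.2.2⟩)
  refine ⟨𝒞, h1, h2, by omega, ?_⟩
  rw [hcardV] at h4
  have h4' : ((univ.filter (fun v : V => ∀ l ∈ 𝒞, v ∉ l)).card : ℝ) + D.card * (m - 1) ≤
      n + D.card * (8 * K) := by
    have hh : (m : ℝ) - 1 ≤ 2 * ((m / 2 : ℕ) : ℝ) := by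
      have : m ≤ 2 * (m / 2) + 1 := by omega
      have : (m : ℝ) ≤ 2 * ((m / 2 : ℕ) : ℝ) + 1 := by exact_mod_cast this
      linarith
    have h5 : ((univ.filter (fun v : V => ∀ l ∈ 𝒞, v ∉ l)).card : ℝ) +
      D.card * (2 * ((m / 2 : ℕ) : ℝ)) ≤ n + D.card * (8 * K) := by exact_mod_cast h4
    have h6 := mul_le_mul_of_nonneg_left hh (Nat.cast_nonneg (α := ℝ) D.card)
    linarith
  have hDkR : (D.card : ℝ) ≤ k := by exact_mod_cast hDk
  have hDrR : (k : ℝ) ≤ D.card + r := by exact_mod_cast hDr'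
  generalize ((univ.filter (fun v : V => ∀ l ∈ 𝒞, v ∉ l)).card : ℝ) = x at *
  generalize (D.card : ℝ) = d at *
  have g1 : d * (8 * K) ≤ k * (8 * (η * (m + 1) + 1)) :=
    mul_le_mul hDkR (by linarith) (by positivity) (by positivity)
  have g2 : (k - α / 4 * k) * ((m : ℝ) - 1) ≤ d * (m - 1) :=
    mul_le_mul_of_nonneg_right (by linarith) (by linarith)
  have g3 : (k : ℝ) * (m + 1) ≤ 2 * n := by nlinarith
  have g4 : η * (k * (m + 1)) ≤ α / 100 * (2 * n) :=
    mul_le_mul hη1 g3 (by positivity) (by positivity)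
  have g5 : α * (k * m) ≤ α * n := mul_le_mul_of_nonneg_left hmkR hα.le
  have g6 : 0 ≤ α * k := by positivity
  nlinarith

/-- Theorem 2: for all `c, α > 0` there exist `ε > 0` and `C ∈ ℕ` such that for all
large `n`, every `n`-vertex graph with all degrees `(1±ε)cn` contains at most `C`
vertex-disjoint cycles covering all but at most `αn` vertices. -/
theorem stmt_18 (c α : ℝ) (hc : 0 < c) (hα : 0 < α) :
    ∃ (ε : ℝ) (C : ℕ), 0 < ε ∧ 0 < C ∧
      ∃ n₀ : ℕ, ∀ n : ℕ, n₀ ≤ n →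
        ∀ (V : Type) [Fintype V] [DecidableEq V] (G : SimpleGraph V) [DecidableRel G.Adj],
          Fintype.card V = n →
          (∀ v : V, (1 - ε) * c * n ≤ (G.degree v : ℝ) ∧ (G.degree v : ℝ) ≤ (1 + ε) * c * n) →
          ∃ 𝒞 : Finset (List V),
            (∀ l ∈ 𝒞, IsCycleList G l) ∧
            (∀ l ∈ 𝒞, ∀ l' ∈ 𝒞, l ≠ l' → ∀ v, v ∈ l → v ∉ l') ∧
            𝒞.card ≤ C ∧
            ((Finset.univ.filter (fun v : V => ∀ l ∈ 𝒞, v ∉ l)).card : ℝ) ≤ α * n := by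
  obtain ⟨ε, C, hε, hC, n₀, h⟩ := main_aux c (min α 1) hc (by positivity) (min_le_right _ _)
  refine ⟨ε, C, hε, hC, n₀, ?_⟩
  intro n hn V _ _ G _ hV hdeg
  obtain ⟨𝒞, h1, h2, h3, h4⟩ := h n hn V G hV hdeg
  refine ⟨𝒞, h1, h2, h3, ?_⟩
  have h5 : min α 1 * (n : ℝ) ≤ α * n :=
    mul_le_mul_of_nonneg_right (min_le_left _ _) (Nat.cast_nonneg _)
  refine le_trans (le_of_eq ?_) (h4.trans h5)
  congr!
end
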